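/- Let d ≥ 1, γ > 1, 1 ≤ p, q < ∞, 0 ≤ s ≤ 1, α ∈ (0, d), and 0 ≤ β₁, β₂ < ∞ be such that β₁p + 2β₂q = 1 and (d − sp)β₁ + (d + α)β₂ = d/γ, and assume β₁γ + β₂γ ≥ 1. Then there exists a constant C > 0 such that for every g ∈ C¹_c(ℝ^d): ‖g‖_{L^γ(ℝ^d)} ≤ C ‖g‖_{Ẇ^{s,p}(ℝ^d)}^{β₁p} ( ∫_{ℝ^d}∫_{ℝ^d} |g(x)|^q |g(y)|^q / |x−y|^{d−α} dx dy )^{β₂}. -/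

import Mathlib

open MeasureTheory Real

/-- Homogeneous (fractional) Sobolev seminorm `‖g‖_{Ẇ^{s,p}(ℝ^d)}`:
for `0 < s < 1` the Gagliardo seminorm, for `s = 1` the `L^p` norm of the gradient,
for `s = 0` the `L^p` norm. -/
noncomputable def sobolevSemi (d : ℕ) (s p : ℝ) (g : EuclideanSpace ℝ (Fin d) → ℝ) : ℝ :=
  if s = 1 then (∫ x, ‖fderiv ℝ g x‖ ^ p) ^ (1 / p)
  else if s = 0 then (∫ x, |g x| ^ p) ^ (1 / p)
  else (∫ x, ∫ y, |g x - g y| ^ p / ‖x - y‖ ^ ((d : ℝ) + s * p)) ^ (1 / p)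

/-- The Coulomb energy `∫∫ |g x|^q |g y|^q / |x-y|^{d-α} dx dy`. -/
noncomputable def coulombEnergy (d : ℕ) (q α : ℝ) (g : EuclideanSpace ℝ (Fin d) → ℝ) : ℝ :=
  ∫ x, ∫ y, |g x| ^ q * |g y| ^ q / ‖x - y‖ ^ ((d : ℝ) - α)

/-
Put `n = dim E` and `θ = β₁ + β₂ - 1 / γ ≥ 0`. Averaging `|g|` over the ball of radius `r` around
`x`, and using Jensen once for the power `γ` and once for the power `q`, bounds the average `A` by
`A ^ (γ θ + q β₂) r ^ (n θ + α β₂) ≤ c N(x)`, where `N(x) = (∫ |g| ^ γ) ^ θ W(x) ^ β₂` and `W` is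
the Riesz potential of `|g| ^ q`. By scaling, the exponent of `r` is `s p β₁`.

For `s < 1`, choose `r = r(x)` so that the average is at most `|g x| / 2`. The Gagliardo density
`D(x)` then controls `(|g x| / r ^ s) ^ p` and, eliminating `r`, `|g x|` is bounded pointwise by a
power of `D(x) ^ β₁ N(x)`. Integrating `|g| ^ γ`, Hölder's inequality and absorption of the factor
`(∫ |g| ^ γ) ^ θ` give the theorem.

For `s = 1` the density is not available pointwise. On each dyadic level `|g| ~ 4 ^ k` a radius
`r_k` is chosen as above for the height `4 ^ k / 8`. Since `N` with a softened kernel is monotone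
under displacement, `r_k` can be taken `1 / 2`-Lipschitz, so that the maps `x ↦ x + r_k(x) w` with
`|w| ≤ 1` distort volume by a bounded factor. This yields
`∫_{|g| ≥ 4 ^ k} (4 ^ k / r_k) ^ p ≤ C ∫_{4 ^ k / 4 < |g| ≤ 4 ^ k} |∇g| ^ p` after truncating `g`
to the level, and the right-hand sides sum to `∫ |∇g| ^ p`.
-/

section Development

open Module Set Metric
open scoped ENNReal NNReal

section JensenAndScaling

lemma lintegral_rpow_le_lintegral_rpow {Ω : Type*} [MeasurableSpace Ω] (P : Measure Ω)
    [IsProbabilityMeasure P] {p : ℝ} (hp : 1 ≤ p) {f : Ω → ℝ≥0∞} (hf : Measurable f) :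
    (∫⁻ x, f x ∂P) ^ p ≤ ∫⁻ x, f x ^ p ∂P := by
  have hp₀ : 0 < p := by linarith
  have h := eLpNorm'_le_eLpNorm'_of_exponent_le one_pos hp P hf.aestronglyMeasurable
  simp only [eLpNorm', enorm_eq_self, ENNReal.rpow_one, div_one] at h
  rwa [one_div, ENNReal.le_rpow_inv_iff hp₀] at h

lemma half_enorm_le_lintegral_enorm_sub {Ω F : Type*} [MeasurableSpace Ω] {P : Measure Ω}
    [IsProbabilityMeasure P] [NormedAddCommGroup F] {f : Ω → F} {c : F}
    (hf : AEStronglyMeasurable f P) (hc : ∫⁻ w, ‖f w‖ₑ ∂P ≤ ‖c‖ₑ / 2) :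
    ‖c‖ₑ / 2 ≤ ∫⁻ w, ‖c - f w‖ₑ ∂P := by
  have hsum : ‖c‖ₑ / 2 + ‖c‖ₑ / 2 ≤ ‖c‖ₑ / 2 + ∫⁻ w, ‖c - f w‖ₑ ∂P :=
    calc ‖c‖ₑ / 2 + ‖c‖ₑ / 2 = ∫⁻ _, ‖c‖ₑ ∂P := by simp [ENNReal.add_halves]
      _ ≤ ∫⁻ w, (‖f w‖ₑ + ‖c - f w‖ₑ) ∂P := lintegral_mono fun w => by
        simpa using enorm_add_le (f w) (c - f w)
      _ = ∫⁻ w, ‖f w‖ₑ ∂P + ∫⁻ w, ‖c - f w‖ₑ ∂P := lintegral_add_left' hf.enorm _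
      _ ≤ ‖c‖ₑ / 2 + ∫⁻ w, ‖c - f w‖ₑ ∂P := by gcongr
  exact (ENNReal.add_le_add_iff_left (by finiteness)).1 hsum

lemma le_mul_div_of_le {a k c : ℝ≥0∞} (hk : k ≠ 0 ∨ a = 0) (hkt : k ≠ ∞) (hkc : k ≤ c) :
    a ≤ c * (a / k) := by
  rcases hk with hk | rfl
  · calc a = k * (a / k) := (ENNReal.mul_div_cancel hk hkt).symm
      _ ≤ c * (a / k) := by gcongr
  · simp

lemma exists_pos_mul_ofReal_rpow_eq {c N : ℝ≥0∞} (hc₀ : c ≠ 0) (hc : c ≠ ∞) (hN₀ : N ≠ 0)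
    (hN : N ≠ ∞) {h : ℝ} (hh : 0 < h) : ∃ r > 0, c * ENNReal.ofReal r ^ h = N := by
  have hρ : (N / c) ^ (1 / h) ≠ ∞ := by finiteness
  refine ⟨((N / c) ^ (1 / h)).toReal, ENNReal.toReal_pos ?_ hρ, ?_⟩
  · simp [hN₀, hc, hh.not_gt, ENNReal.rpow_eq_zero_iff]
  · rw [ENNReal.ofReal_toReal hρ, ← ENNReal.rpow_mul, one_div_mul_cancel hh.ne', ENNReal.rpow_one,
      ENNReal.mul_div_cancel hc₀ hc]

end JensenAndScaling

section BallAverages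

variable {E : Type*} [NormedAddCommGroup E] [MeasurableSpace E]

/-- The uniform probability measure on the closed unit ball, that is, the normalized restriction
of `μ`; it turns averages over all balls into integrals over one probability space. -/
noncomputable def unitBallMeasure (μ : Measure E) : Measure E :=
  ProbabilityTheory.cond μ (closedBall 0 1)

lemma ae_norm_le_one_unitBallMeasure [BorelSpace E] (μ : Measure E) :
    ∀ᵐ w ∂unitBallMeasure μ, ‖w‖ ≤ 1 := by
  filter_upwards [ProbabilityTheory.ae_cond_mem
    (isClosed_closedBall (x := (0 : E)) (ε := 1)).measurableSet] with w hw
  simpa using hw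

lemma inv_measure_unitBall_ne_top (μ : Measure E) [μ.IsOpenPosMeasure] :
    (μ (closedBall (0 : E) 1))⁻¹ ≠ ∞ :=
  ENNReal.inv_ne_top.2 (measure_closedBall_pos μ 0 one_pos).ne'

variable [NormedSpace ℝ E]

/-- The average of `F` over the closed ball of centre `x` and radius `r`, written as an integral
over the unit ball so that `r` may depend on `x`. -/
noncomputable def ballAverage (μ : Measure E) (F : E → ℝ≥0∞) (x : E) (r : ℝ) : ℝ≥0∞ :=
  ∫⁻ w, F (x + r • w) ∂unitBallMeasure μ

variable [BorelSpace E] [FiniteDimensional ℝ E] (μ : Measure E) [μ.IsAddHaarMeasure]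

instance : IsProbabilityMeasure (unitBallMeasure μ) :=
  ProbabilityTheory.cond_isProbabilityMeasure_of_finite
    (measure_closedBall_pos μ 0 one_pos).ne' measure_closedBall_lt_top.ne

lemma ballAverage_rpow_le {F : E → ℝ≥0∞} (hF : Measurable F) {p : ℝ} (hp : 1 ≤ p) (x : E)
    (r : ℝ) : ballAverage μ F x r ^ p ≤ ballAverage μ (fun y => F y ^ p) x r :=
  lintegral_rpow_le_lintegral_rpow _ hp (by fun_prop)

lemma ofReal_pow_mul_lintegral_comp_add_smul {F : E → ℝ≥0∞} (hF : Measurable F) (x : E) {r : ℝ}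
    (hr : 0 < r) :
    ENNReal.ofReal r ^ finrank ℝ E * ∫⁻ w, F (x + r • w) ∂μ = ∫⁻ y, F y ∂μ := by
  have hmap : ∫⁻ w, F (x + r • w) ∂μ = ∫⁻ z, F (x + z) ∂μ.map (r • ·) := by
    rw [lintegral_map (by fun_prop) (by fun_prop)]
  rw [hmap, Measure.map_addHaar_smul μ hr.ne', lintegral_smul_measure, lintegral_add_left_eq_self,
    abs_of_pos (by positivity), ENNReal.ofReal_inv_of_pos (by positivity), ENNReal.ofReal_pow hr.le,
    smul_eq_mul, ENNReal.mul_inv_cancel_left' (by simp [hr]) (by simp)]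

lemma ofReal_pow_mul_ballAverage_le {F H : E → ℝ≥0∞} (hH : Measurable H) {x : E} {r : ℝ}
    (hr : 0 < r) (hFH : ∀ y, ‖x - y‖ ≤ r → F y ≤ H y) :
    ENNReal.ofReal r ^ finrank ℝ E * ballAverage μ F x r ≤
      (μ (closedBall 0 1))⁻¹ * ∫⁻ y, H y ∂μ := by
  rw [← ofReal_pow_mul_lintegral_comp_add_smul μ hH x hr, ballAverage, unitBallMeasure,
    ProbabilityTheory.cond, lintegral_smul_measure, smul_eq_mul, mul_left_comm]
  gcongr _ * (_ * ?_)
  calc ∫⁻ w in closedBall 0 1, F (x + r • w) ∂μ ≤ ∫⁻ w in closedBall 0 1, H (x + r • w) ∂μ :=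
        setLIntegral_mono' isClosed_closedBall.measurableSet fun w hw => hFH _ <| by
          rw [sub_add_cancel_left, norm_neg, norm_smul, Real.norm_of_nonneg hr.le]
          exact mul_le_of_le_one_right hr.le (by simpa using hw)
    _ ≤ ∫⁻ w, H (x + r • w) ∂μ := setLIntegral_le_lintegral _ _

end BallAverages

section SoftRieszPotential

variable {E : Type*} [NormedAddCommGroup E] [NormedSpace ℝ E] [MeasurableSpace E]

/-- The Riesz potential of order `α` of `F`, with its kernel `|x - y| ^ (α - n)` softened to
`(ρ + |x - y|) ^ (α - n)`; the true Riesz potential is the case `ρ = 0`. -/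
noncomputable def softRieszPotential (μ : Measure E) (α : ℝ) (F : E → ℝ≥0∞) (x : E) (ρ : ℝ) :
    ℝ≥0∞ :=
  ∫⁻ y, F y / ENNReal.ofReal (ρ + ‖x - y‖) ^ ((finrank ℝ E : ℝ) - α) ∂μ

/-- The quantity `(∫ F ^ γ) ^ θ * W(x, ρ) ^ b`, `W` being the softened Riesz potential of `F ^ q`,
that controls the averages of `F` at scale `ρ` around `x`. -/
noncomputable def localEnergy (μ : Measure E) (γ q α θ b : ℝ) (F : E → ℝ≥0∞) (x : E) (ρ : ℝ) :
    ℝ≥0∞ :=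
  (∫⁻ y, F y ^ γ ∂μ) ^ θ * softRieszPotential μ α (fun y => F y ^ q) x ρ ^ b

lemma softRieszPotential_le_softRieszPotential (μ : Measure E) {α : ℝ} (hα : α ≤ finrank ℝ E)
    (F : E → ℝ≥0∞) {x x' : E} {ρ ρ' : ℝ} (h : ρ + ‖x - x'‖ ≤ ρ') :
    softRieszPotential μ α F x' ρ' ≤ softRieszPotential μ α F x ρ := by
  refine lintegral_mono fun y => ENNReal.div_le_div_left (ENNReal.rpow_le_rpow
    (ENNReal.ofReal_le_ofReal ?_) (sub_nonneg.2 hα)) _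
  linarith [norm_sub_le_norm_sub_add_norm_sub x x' y]

lemma localEnergy_le_localEnergy (μ : Measure E) {γ q α θ b : ℝ} (hα : α ≤ finrank ℝ E)
    (hb : 0 ≤ b) (F : E → ℝ≥0∞) {x x' : E} {ρ ρ' : ℝ} (h : ρ + ‖x - x'‖ ≤ ρ') :
    localEnergy μ γ q α θ b F x' ρ' ≤ localEnergy μ γ q α θ b F x ρ := by
  unfold localEnergy
  gcongr
  exact softRieszPotential_le_softRieszPotential μ hα _ h

/-- The constant in the bound of ball averages by the local energy; the factor `5` comes from
`4 * r + |x - y| ≤ 5 * r` on the ball of radius `r`. -/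
noncomputable def averagingConst (μ : Measure E) (α θ b : ℝ) : ℝ≥0∞ :=
  (μ (closedBall 0 1))⁻¹ ^ θ * ((μ (closedBall 0 1))⁻¹ * 5 ^ ((finrank ℝ E : ℝ) - α)) ^ b

lemma averagingConst_ne_zero [FiniteDimensional ℝ E] (μ : Measure E) [μ.IsAddHaarMeasure]
    (α θ b : ℝ) : averagingConst μ α θ b ≠ 0 := by
  have hv := inv_measure_unitBall_ne_top μ
  have hv₀ : (μ (closedBall (0 : E) 1))⁻¹ ≠ 0 := ENNReal.inv_ne_zero.2 measure_closedBall_lt_top.ne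
  have h5 : 0 < (5 : ℝ≥0∞) ^ ((finrank ℝ E : ℝ) - α) := ENNReal.rpow_pos (by simp) (by simp)
  have hv5 : 0 < (μ (closedBall (0 : E) 1))⁻¹ * 5 ^ ((finrank ℝ E : ℝ) - α) :=
    ENNReal.mul_pos hv₀ h5.ne'
  exact mul_ne_zero (ENNReal.rpow_pos (by positivity) hv).ne'
    (ENNReal.rpow_pos hv5 (by finiteness)).ne'

lemma averagingConst_ne_top [FiniteDimensional ℝ E] (μ : Measure E) [μ.IsAddHaarMeasure]
    (α θ b : ℝ) : averagingConst μ α θ b ≠ ∞ := by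
  have hv := inv_measure_unitBall_ne_top μ
  have hv₀ : (μ (closedBall (0 : E) 1))⁻¹ ≠ 0 := ENNReal.inv_ne_zero.2 measure_closedBall_lt_top.ne
  unfold averagingConst
  finiteness

variable [BorelSpace E] [FiniteDimensional ℝ E] (μ : Measure E) [μ.IsAddHaarMeasure]
  {F : E → ℝ≥0∞} (hF : Measurable F) {x : E} {r : ℝ}

include hF

lemma measurable_softRieszPotential (α ρ : ℝ) :
    Measurable fun x => softRieszPotential μ α F x ρ := by
  refine Measurable.lintegral_prod_right'
    (f := fun z : E × E => F z.2 / ENNReal.ofReal (ρ + ‖z.1 - z.2‖) ^ _) ?_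
  fun_prop

lemma ballAverage_rpow_mul_ofReal_rpow_finrank_le {γ : ℝ} (hγ : 1 ≤ γ) (hr : 0 < r) :
    ballAverage μ F x r ^ γ * ENNReal.ofReal r ^ (finrank ℝ E : ℝ) ≤
      (μ (closedBall 0 1))⁻¹ * ∫⁻ y, F y ^ γ ∂μ := by
  rw [mul_comm, ENNReal.rpow_natCast]
  calc _ ≤ ENNReal.ofReal r ^ finrank ℝ E * ballAverage μ (fun y => F y ^ γ) x r := by
        gcongr
        exact ballAverage_rpow_le μ hF hγ x r
    _ ≤ _ := ofReal_pow_mul_ballAverage_le μ (by fun_prop) hr fun _ _ => le_rfl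

lemma ballAverage_rpow_mul_ofReal_rpow_le_softRieszPotential {α q : ℝ} (hq : 1 ≤ q)
    (hα : α ≤ finrank ℝ E) (hr : 0 < r) :
    ballAverage μ F x r ^ q * ENNReal.ofReal r ^ α ≤
      (μ (closedBall 0 1))⁻¹ * 5 ^ ((finrank ℝ E : ℝ) - α) *
        softRieszPotential μ α (fun y => F y ^ q) x (4 * r) := by
  have ha : 0 ≤ (finrank ℝ E : ℝ) - α := sub_nonneg.2 hα
  set a := (finrank ℝ E : ℝ) - α with ha_def
  have hr₀ : ENNReal.ofReal r ≠ 0 := by simpa using hr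
  have hkernel : ∀ y, ‖x - y‖ ≤ r → F y ^ q ≤
      (5 * ENNReal.ofReal r) ^ a * (F y ^ q / ENNReal.ofReal (4 * r + ‖x - y‖) ^ a) := by
    intro y hy
    refine le_mul_div_of_le (.inl (by positivity)) (by finiteness) ?_
    rw [← ENNReal.ofReal_ofNat, ← ENNReal.ofReal_mul (by norm_num)]
    gcongr
    linarith
  have hav := ofReal_pow_mul_ballAverage_le μ (by fun_prop) hr hkernel
  rw [lintegral_const_mul _ (by fun_prop)] at hav
  refine (ENNReal.mul_le_mul_iff_right (a := ENNReal.ofReal r ^ a) (by positivity)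
    (by finiteness)).1 ?_
  calc ENNReal.ofReal r ^ a * (ballAverage μ F x r ^ q * ENNReal.ofReal r ^ α)
      = ENNReal.ofReal r ^ finrank ℝ E * ballAverage μ F x r ^ q := by
        rw [mul_left_comm, ← ENNReal.rpow_add _ _ hr₀ (by finiteness), ha_def, sub_add_cancel,
          ENNReal.rpow_natCast, mul_comm]
    _ ≤ ENNReal.ofReal r ^ finrank ℝ E * ballAverage μ (fun y => F y ^ q) x r := by
        gcongr
        exact ballAverage_rpow_le μ hF hq x r
    _ ≤ _ := hav
    _ = _ := by
        rw [ENNReal.mul_rpow_of_nonneg _ _ ha, softRieszPotential]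
        ring

lemma ballAverage_rpow_mul_ofReal_rpow_le_localEnergy {γ q α θ b : ℝ} (hγ : 1 ≤ γ) (hq : 1 ≤ q)
    (hα₀ : 0 ≤ α) (hα : α ≤ finrank ℝ E) (hθ : 0 ≤ θ) (hb : 0 ≤ b) (hr : 0 < r) :
    ballAverage μ F x r ^ (γ * θ + q * b) * ENNReal.ofReal r ^ ((finrank ℝ E : ℝ) * θ + α * b) ≤
      averagingConst μ α θ b * localEnergy μ γ q α θ b F x (4 * r) := by
  calc _ = (ballAverage μ F x r ^ γ * ENNReal.ofReal r ^ (finrank ℝ E : ℝ)) ^ θ *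
        (ballAverage μ F x r ^ q * ENNReal.ofReal r ^ α) ^ b := by
        rw [ENNReal.mul_rpow_of_nonneg _ _ hθ, ENNReal.mul_rpow_of_nonneg _ _ hb,
          ← ENNReal.rpow_mul, ← ENNReal.rpow_mul, ← ENNReal.rpow_mul, ← ENNReal.rpow_mul,
          ENNReal.rpow_add_of_nonneg _ _ (by positivity) (by positivity),
          ENNReal.rpow_add_of_nonneg _ _ (by positivity) (by positivity)]
        ring
    _ ≤ ((μ (closedBall 0 1))⁻¹ * ∫⁻ y, F y ^ γ ∂μ) ^ θ *
        ((μ (closedBall 0 1))⁻¹ * 5 ^ ((finrank ℝ E : ℝ) - α) *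
        softRieszPotential μ α (fun y => F y ^ q) x (4 * r)) ^ b := by
        gcongr ?_ ^ θ * ?_ ^ b
        · exact ballAverage_rpow_mul_ofReal_rpow_finrank_le μ hF hγ hr
        · exact ballAverage_rpow_mul_ofReal_rpow_le_softRieszPotential μ hF hq hα hr
    _ = _ := by
        rw [ENNReal.mul_rpow_of_nonneg _ _ hθ, ENNReal.mul_rpow_of_nonneg _ _ hb, localEnergy,
          averagingConst]
        ring

lemma ballAverage_le_of_averagingConst_mul_localEnergy_le {γ q α θ b : ℝ} (hγ : 1 ≤ γ)
    (hq : 1 ≤ q) (hα₀ : 0 ≤ α) (hα : α ≤ finrank ℝ E) (hθ : 0 ≤ θ) (hb : 0 ≤ b)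
    (hpos : 0 < γ * θ + q * b) (hr : 0 < r) {A : ℝ≥0∞}
    (h : averagingConst μ α θ b * localEnergy μ γ q α θ b F x (4 * r) ≤
      A ^ (γ * θ + q * b) * ENNReal.ofReal r ^ ((finrank ℝ E : ℝ) * θ + α * b)) :
    ballAverage μ F x r ≤ A := by
  rw [← ENNReal.rpow_le_rpow_iff hpos, ← ENNReal.mul_le_mul_iff_left
    (c := ENNReal.ofReal r ^ ((finrank ℝ E : ℝ) * θ + α * b)) (by positivity) (by finiteness)]
  exact (ballAverage_rpow_mul_ofReal_rpow_le_localEnergy μ hF hγ hq hα₀ hα hθ hb hr).trans h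

end SoftRieszPotential

section HolderAbsorption

variable {X : Type*} [MeasurableSpace X] {ν : Measure X}

lemma rpow_lintegral_le_of_rpow_le {F D U : X → ℝ≥0∞} (hD : AEMeasurable D ν)
    (hU : AEMeasurable U ν) {J : ℝ≥0∞} {b₁ b₂ : ℝ} (hb₁ : 0 ≤ b₁) (hb₂ : 0 ≤ b₂)
    (hb : 0 < b₁ + b₂) (h : ∀ x, F x ^ (b₁ + b₂) ≤ J * (D x ^ b₁ * U x ^ b₂)) :
    (∫⁻ x, F x ∂ν) ^ (b₁ + b₂) ≤ J * ((∫⁻ x, D x ∂ν) ^ b₁ * (∫⁻ x, U x ∂ν) ^ b₂) := by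
  set σ := b₁ + b₂ with hσ
  have hroot : ∀ a b : ℝ≥0∞,
      (J * (a ^ b₁ * b ^ b₂)) ^ σ⁻¹ = J ^ σ⁻¹ * (a ^ (b₁ / σ) * b ^ (b₂ / σ)) := fun a b => by
    rw [ENNReal.mul_rpow_of_nonneg _ _ (by positivity),
      ENNReal.mul_rpow_of_nonneg _ _ (by positivity), ← ENNReal.rpow_mul, ← ENNReal.rpow_mul,
      ← div_eq_mul_inv, ← div_eq_mul_inv]
  rw [← ENNReal.le_rpow_inv_iff hb, hroot]
  calc ∫⁻ x, F x ∂ν ≤ ∫⁻ x, J ^ σ⁻¹ * (D x ^ (b₁ / σ) * U x ^ (b₂ / σ)) ∂ν :=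
        lintegral_mono fun x => by
          rw [← hroot, ENNReal.le_rpow_inv_iff hb]
          exact h x
    _ = J ^ σ⁻¹ * ∫⁻ x, D x ^ (b₁ / σ) * U x ^ (b₂ / σ) ∂ν :=
        lintegral_const_mul'' _ (by fun_prop)
    _ ≤ _ := by
        gcongr
        exact ENNReal.lintegral_mul_norm_pow_le hD hU (by positivity) (by positivity)
          (by rw [← add_div, ← hσ, div_self hb.ne'])

/- Both sides of the pointwise bound are multiplied by `G ^ (q * b₂)` and integrated with Hölder's
inequality; the power of `∫ G ^ γ` on the right is then absorbed into the left. -/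
lemma rpow_lintegral_le_of_pointwise {G D V : X → ℝ≥0∞} (hG : AEMeasurable G ν)
    (hD : AEMeasurable D ν) (hV : AEMeasurable V ν) {C : ℝ≥0∞} {γ q e θ b₁ b₂ : ℝ} (hγ : 0 < γ)
    (hq : 0 ≤ q) (he : 0 ≤ e) (hθ : 0 ≤ θ) (hb₁ : 0 ≤ b₁) (hb₂ : 0 ≤ b₂)
    (heq : e + q * b₂ = γ * (b₁ + b₂)) (hθeq : θ + 1 / γ = b₁ + b₂)
    (hfin : ∫⁻ x, G x ^ γ ∂ν ≠ ∞)
    (hpt : ∀ x, G x ^ e ≤ C * (D x ^ b₁ * ((∫⁻ y, G y ^ γ ∂ν) ^ θ * V x ^ b₂))) :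
    (∫⁻ x, G x ^ γ ∂ν) ^ (1 / γ) ≤
      C * ((∫⁻ x, D x ∂ν) ^ b₁ * (∫⁻ x, V x * G x ^ q ∂ν) ^ b₂) := by
  set I := ∫⁻ x, G x ^ γ ∂ν
  rcases eq_or_ne I 0 with h₀ | h₀
  · rw [h₀, ENNReal.zero_rpow_of_pos (by positivity)]
    exact zero_le
  have hmul : ∀ x, (G x ^ γ) ^ (b₁ + b₂) ≤
      C * I ^ θ * (D x ^ b₁ * (V x * G x ^ q) ^ b₂) := fun x => by
    calc (G x ^ γ) ^ (b₁ + b₂) = G x ^ e * (G x ^ q) ^ b₂ := by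
          rw [← ENNReal.rpow_mul, ← ENNReal.rpow_mul, ← heq,
            ENNReal.rpow_add_of_nonneg _ _ he (by positivity)]
      _ ≤ C * (D x ^ b₁ * (I ^ θ * V x ^ b₂)) * (G x ^ q) ^ b₂ := by
          gcongr
          exact hpt x
      _ = _ := by
          rw [ENNReal.mul_rpow_of_nonneg _ _ hb₂]
          ring
  have hb : 0 < b₁ + b₂ := hθeq ▸ by positivity
  have hholder := rpow_lintegral_le_of_rpow_le hD (hV.mul (hG.pow_const q)) hb₁ hb₂ hb hmul
  rw [← hθeq, ENNReal.rpow_add _ _ h₀ hfin, mul_comm C, mul_assoc] at hholder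
  exact (ENNReal.mul_le_mul_iff_right (by positivity) (by finiteness)).1 hholder

end HolderAbsorption

section CompactSupport

variable {X F : Type*} [TopologicalSpace X] [MeasurableSpace X] [OpensMeasurableSpace X]
  [NormedAddCommGroup F] {ν : Measure X} {f : X → F} {r : ℝ}

lemma lintegral_enorm_rpow_ne_top [IsFiniteMeasureOnCompacts ν] (hf : Continuous f)
    (hfs : HasCompactSupport f) (hr : 0 < r) : ∫⁻ x, ‖f x‖ₑ ^ r ∂ν ≠ ∞ := by
  have hint : Integrable (fun x => ‖f x‖ ^ r) ν :=
    (hf.norm.rpow_const fun _ => .inr hr.le).integrable_of_hasCompactSupport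
      (hfs.norm.comp_left (g := fun u : ℝ => u ^ r) (Real.zero_rpow hr.ne'))
  convert hint.lintegral_lt_top.ne using 4 with x
  rw [← ENNReal.ofReal_rpow_of_nonneg (norm_nonneg _) hr.le, ofReal_norm]

lemma lintegral_enorm_rpow_ne_zero [ν.IsOpenPosMeasure] (hf : Continuous f) (hf₀ : f ≠ 0)
    (hr : 0 < r) : ∫⁻ x, ‖f x‖ₑ ^ r ∂ν ≠ 0 := by
  intro h
  have hc : Continuous fun x => ‖f x‖ₑ ^ r := ENNReal.continuous_rpow_const.comp hf.enorm
  rw [lintegral_eq_zero_iff hc.measurable, hc.ae_eq_iff_eq ν continuous_zero] at h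
  refine hf₀ (funext fun x => ?_)
  simpa [hr, hr.not_gt] using congrFun h x

end CompactSupport

section RieszPotentialBounds

variable {E : Type*} [NormedAddCommGroup E] [NormedSpace ℝ E] [MeasurableSpace E]

lemma softRieszPotential_ne_zero [BorelSpace E] (μ : Measure E) {α : ℝ} (hα : α ≤ finrank ℝ E)
    {F : E → ℝ≥0∞} (hF : Measurable F) (hF₀ : ∫⁻ y, F y ∂μ ≠ 0) (x : E) (ρ : ℝ) :
    softRieszPotential μ α F x ρ ≠ 0 := by
  contrapose! hF₀
  rw [softRieszPotential, lintegral_eq_zero_iff (by fun_prop)] at hF₀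
  rw [lintegral_eq_zero_iff hF]
  filter_upwards [hF₀] with y hy
  exact (ENNReal.div_eq_zero_iff.1 hy).resolve_right (by finiteness)

variable [BorelSpace E] [FiniteDimensional ℝ E] (μ : Measure E) [μ.IsAddHaarMeasure]

lemma setLIntegral_ball_inv_norm_rpow_ne_top {a : ℝ} (han : a < finrank ℝ E)
    (hn : 0 < finrank ℝ E) : ∫⁻ z in ball (0 : E) 1, (ENNReal.ofReal ‖z‖ ^ a)⁻¹ ∂μ ≠ ∞ := by
  have : Nontrivial E := Module.nontrivial_of_finrank_pos hn
  have hloc : LocallyIntegrable (fun z : E => ‖z‖ ^ (-a)) μ :=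
    locallyIntegrable_of_norm_le_rpow (C := 1) hn han
      (.of_forall fun z => by rw [Real.norm_of_nonneg (by positivity), one_mul])
      (measurable_norm.pow_const _).aestronglyMeasurable
  have hint : IntegrableOn (fun z : E => ‖z‖ ^ (-a)) (ball 0 1) μ :=
    (hloc.integrableOn_isCompact (isCompact_closedBall 0 1)).mono_set ball_subset_closedBall
  convert hint.lintegral_lt_top.ne using 1
  have hne : ∀ᵐ z ∂μ, z ≠ (0 : E) := by simp [ae_iff]
  refine lintegral_congr_ae (ae_restrict_of_ae ?_)
  filter_upwards [hne] with z hz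
  rw [← ENNReal.ofReal_rpow_of_pos (norm_pos_iff.2 hz), ENNReal.rpow_neg]

lemma softRieszPotential_zero_le {α : ℝ} (hα : α ≤ finrank ℝ E) {F : E → ℝ≥0∞} {M : ℝ≥0∞}
    (hF : Measurable F) (hM : ∀ y, F y ≤ M) (x : E) :
    softRieszPotential μ α F x 0 ≤
      M * ∫⁻ z in ball (0 : E) 1, (ENNReal.ofReal ‖z‖ ^ ((finrank ℝ E : ℝ) - α))⁻¹ ∂μ +
        ∫⁻ y, F y ∂μ := by
  set k : E → ℝ≥0∞ := (ball (0 : E) 1).indicator fun z =>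
    (ENNReal.ofReal ‖z‖ ^ ((finrank ℝ E : ℝ) - α))⁻¹ with hk
  have hkm : Measurable k := Measurable.indicator (by fun_prop) measurableSet_ball
  calc softRieszPotential μ α F x 0 ≤ ∫⁻ y, (M * k (x - y) + F y) ∂μ := by
        refine lintegral_mono fun y => ?_
        rw [zero_add]
        by_cases hy : x - y ∈ ball (0 : E) 1
        · rw [hk, indicator_of_mem hy, div_eq_mul_inv]
          exact le_add_right (mul_le_mul_left (hM y) _)
        · have hone : 1 ≤ ENNReal.ofReal ‖x - y‖ := ENNReal.one_le_ofReal.2 (by simpa using hy)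
          refine le_add_left (ENNReal.div_le_of_le_mul (le_mul_of_one_le_right' ?_))
          simpa using ENNReal.rpow_le_rpow hone (sub_nonneg.2 hα)
    _ = _ := by
        rw [lintegral_add_right _ hF, lintegral_const_mul _ (by fun_prop),
          lintegral_sub_left_eq_self k x, hk, lintegral_indicator measurableSet_ball]

lemma exists_softRieszPotential_zero_le {F : Type*} [NormedAddCommGroup F] {g : E → F}
    (hg : Continuous g) (hgs : HasCompactSupport g) {α q : ℝ} (hα₀ : 0 < α)
    (hα : α ≤ finrank ℝ E) (hq : 0 < q) :
    ∃ B ≠ ∞, ∀ x, softRieszPotential μ α (fun y => ‖g y‖ₑ ^ q) x 0 ≤ B := by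
  obtain ⟨M, hM⟩ := hgs.exists_bound_of_continuous hg
  have hn : 0 < finrank ℝ E := by exact_mod_cast hα₀.trans_le hα
  refine ⟨_, ENNReal.add_ne_top.2 ⟨ENNReal.mul_ne_top (a := ENNReal.ofReal M ^ q) (by finiteness)
    (setLIntegral_ball_inv_norm_rpow_ne_top μ (sub_lt_self _ hα₀) hn),
    lintegral_enorm_rpow_ne_top hg hgs hq⟩,
    softRieszPotential_zero_le μ hα (hg.enorm.measurable.pow_const q) fun y => ?_⟩
  rw [← ofReal_norm]
  gcongr
  exact hM y

end RieszPotentialBounds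

section Exponents

/-- The exponents of the interpolation inequality, `n` being the dimension. The nonnegative
surplus `θ = β₁ + β₂ - 1 / γ` over Hölder's condition is the power of `∫ |g| ^ γ` that occurs in the
local energy. -/
structure SobolevRieszExponents (n γ θ p q s α β₁ β₂ : ℝ) : Prop where
  one_le_γ : 1 ≤ γ
  θ_nonneg : 0 ≤ θ
  one_le_p : 1 ≤ p
  one_le_q : 1 ≤ q
  α_pos : 0 < α
  α_le : α ≤ n
  β₁_pos : 0 < β₁
  β₂_nonneg : 0 ≤ β₂
  homogeneity : p * β₁ + 2 * q * β₂ = 1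
  integrability : θ + 1 / γ = β₁ + β₂
  scaling : s * p * β₁ = n * θ + α * β₂

namespace SobolevRieszExponents

variable {n γ θ p q s α β₁ β₂ : ℝ}

lemma of_scaling (hp : 1 ≤ p) (hq : 1 ≤ q) (hα₀ : 0 < α) (hα : α ≤ n) (hβ₁ : 0 ≤ β₁)
    (hβ₂ : 0 ≤ β₂) (hhom : β₁ * p + 2 * β₂ * q = 1)
    (hscale : (n - s * p) * β₁ + (n + α) * β₂ = n / γ) (hint : 1 ≤ β₁ * γ + β₂ * γ) :
    SobolevRieszExponents n γ (β₁ + β₂ - 1 / γ) p q s α β₁ β₂ := by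
  have hγ₀ : 0 < γ := by
    by_contra! h
    nlinarith
  have hsum : β₁ + β₂ ≤ 1 := by nlinarith
  have hγ : 1 / γ ≤ β₁ + β₂ := by
    rw [div_le_iff₀ hγ₀]
    linarith
  have hscale' : s * p * β₁ = n * (β₁ + β₂ - 1 / γ) + α * β₂ := by
    rw [mul_sub, mul_one_div]
    linarith
  refine ⟨by nlinarith, sub_nonneg.2 hγ, hp, hq, hα₀, hα, hβ₁.lt_of_ne ?_, hβ₂, by linarith,
    by ring, hscale'⟩
  rintro rfl
  have hβ₂₀ : 0 < β₂ := by nlinarith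
  nlinarith [mul_pos hα₀ hβ₂₀, mul_nonneg (hα₀.le.trans hα) (sub_nonneg.2 hγ)]

variable (h : SobolevRieszExponents n γ θ p q s α β₁ β₂)

include h

lemma γ_pos : 0 < γ := by linarith [h.one_le_γ]

lemma p_pos : 0 < p := by linarith [h.one_le_p]

lemma q_pos : 0 < q := by linarith [h.one_le_q]

lemma n_pos : 0 < n := h.α_pos.trans_le h.α_le

lemma s_nonneg : 0 ≤ s := by
  have hp := h.p_pos
  have hβ₁ := h.β₁_pos
  have hθ := h.θ_nonneg
  have hn := h.n_pos
  have hα := h.α_pos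
  have hβ₂ := h.β₂_nonneg
  have hscale : 0 ≤ s * (p * β₁) := by
    rw [← mul_assoc, h.scaling]
    positivity
  exact nonneg_of_mul_nonneg_left hscale (by positivity)

lemma scaling_pos (hs : 0 < s) : 0 < n * θ + α * β₂ := by
  have hp := h.p_pos
  have hβ₁ := h.β₁_pos
  rw [← h.scaling]
  positivity

lemma averaging_pos (hs : 0 < s) : 0 < γ * θ + q * β₂ := by
  have hγ := h.γ_pos
  have hq := h.q_pos
  rcases h.θ_nonneg.lt_or_eq with hθ | rfl
  · have hβ₂ := h.β₂_nonneg
    positivity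
  rcases h.β₂_nonneg.lt_or_eq with hβ₂ | rfl
  · positivity
  · simpa using h.scaling_pos hs

lemma add_eq : p * β₁ + (γ * θ + q * β₂) + q * β₂ = γ * (β₁ + β₂) := by
  have hγθ : γ * θ + 1 = γ * (β₁ + β₂) := by
    rw [← h.integrability, mul_add, mul_one_div_cancel h.γ_pos.ne']
  linarith [h.homogeneity]

end SobolevRieszExponents

lemma SobolevRieszExponents.eq_of_zero {n γ θ p q α β₁ β₂ : ℝ}
    (h : SobolevRieszExponents n γ θ p q 0 α β₁ β₂) : β₂ = 0 ∧ β₁ * p = 1 ∧ p = γ := by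
  have hsum : n * θ + α * β₂ = 0 := by simpa using h.scaling.symm
  have hn := mul_nonneg h.n_pos.le h.θ_nonneg
  have ha := mul_nonneg h.α_pos.le h.β₂_nonneg
  obtain rfl : θ = 0 := by simpa [h.n_pos.ne'] using (show n * θ = 0 by linarith)
  obtain rfl : β₂ = 0 := by simpa [h.α_pos.ne'] using (show α * β₂ = 0 by linarith)
  have hp : β₁ * p = 1 := by linarith [h.homogeneity]
  refine ⟨rfl, hp, ?_⟩
  have hβ₁ : 1 / γ = β₁ := by simpa using h.integrability
  rw [← hβ₁, one_div, inv_mul_eq_one₀ h.γ_pos.ne'] at hp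
  exact hp.symm

end Exponents

section PointwiseToEnergy

variable {E F : Type*} [NormedAddCommGroup E] [NormedSpace ℝ E] [MeasurableSpace E]
  [NormedAddCommGroup F]

/-- The Riesz (Coulomb) energy `∫∫ |g x| ^ q |g y| ^ q / |x - y| ^ (n - α) dx dy`, with values in
`[0, ∞]`. -/
noncomputable def eRieszEnergy (μ : Measure E) (q α : ℝ) (g : E → F) : ℝ≥0∞ :=
  ∫⁻ x, softRieszPotential μ α (fun y => ‖g y‖ₑ ^ q) x 0 * ‖g x‖ₑ ^ q ∂μ

variable [BorelSpace E] (μ : Measure E) {g : E → F} (hg : Continuous g)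
  {γ θ p q s α β₁ β₂ : ℝ} (h : SobolevRieszExponents (finrank ℝ E) γ θ p q s α β₁ β₂)

include hg h

lemma localEnergy_ne_zero [μ.IsOpenPosMeasure] (hg₀ : g ≠ 0) (x : E) (ρ : ℝ) :
    localEnergy μ γ q α θ β₂ (fun y => ‖g y‖ₑ) x ρ ≠ 0 := by
  have hI := lintegral_enorm_rpow_ne_zero (ν := μ) hg hg₀ h.γ_pos
  have hV := softRieszPotential_ne_zero μ h.α_le (hg.enorm.measurable.pow_const q)
    (lintegral_enorm_rpow_ne_zero hg hg₀ h.q_pos) x ρ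
  have hθ := h.θ_nonneg
  have hβ₂ := h.β₂_nonneg
  unfold localEnergy
  positivity

variable [FiniteDimensional ℝ E] [μ.IsAddHaarMeasure] (hgs : HasCompactSupport g)

include hgs

lemma localEnergy_ne_top (x : E) {ρ : ℝ} (hρ : 0 ≤ ρ) :
    localEnergy μ γ q α θ β₂ (fun y => ‖g y‖ₑ) x ρ ≠ ∞ := by
  refine ne_top_of_le_ne_top ?_
    (localEnergy_le_localEnergy μ h.α_le h.β₂_nonneg _ (x := x) (ρ := 0) (by simpa using hρ))
  obtain ⟨B, hB, hle⟩ := exists_softRieszPotential_zero_le μ hg hgs h.α_pos h.α_le h.q_pos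
  have hIt := lintegral_enorm_rpow_ne_top (ν := μ) hg hgs h.γ_pos
  have hV := ne_top_of_le_ne_top hB (hle x)
  have hθ := h.θ_nonneg
  have hβ₂ := h.β₂_nonneg
  unfold localEnergy
  finiteness

lemma rpow_lintegral_le_of_enorm_rpow_le {D : E → ℝ≥0∞} (hD : Measurable D) {C : ℝ≥0∞}
    (hpt : ∀ x, ‖g x‖ₑ ^ (p * β₁ + (γ * θ + q * β₂)) ≤
      C * (D x ^ β₁ * localEnergy μ γ q α θ β₂ (fun y => ‖g y‖ₑ) x 0)) :
    (∫⁻ x, ‖g x‖ₑ ^ γ ∂μ) ^ (1 / γ) ≤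
      C * ((∫⁻ x, D x ∂μ) ^ β₁ * eRieszEnergy μ q α g ^ β₂) := by
  have hm := hg.enorm.measurable
  exact rpow_lintegral_le_of_pointwise hm.aemeasurable hD.aemeasurable
    (measurable_softRieszPotential μ (hm.pow_const q) α 0).aemeasurable h.γ_pos h.q_pos.le
    (add_nonneg (mul_nonneg h.p_pos.le h.β₁_pos.le) (add_nonneg (mul_nonneg h.γ_pos.le h.θ_nonneg)
      (mul_nonneg h.q_pos.le h.β₂_nonneg))) h.θ_nonneg h.β₁_pos.le h.β₂_nonneg h.add_eq
    h.integrability (lintegral_enorm_rpow_ne_top hg hgs h.γ_pos) hpt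

end PointwiseToEnergy

section FractionalCase

variable {E F : Type*} [NormedAddCommGroup E] [NormedSpace ℝ E] [MeasurableSpace E]
  [NormedAddCommGroup F]

/-- The inner integral `∫ |g x - g y| ^ p / |x - y| ^ (n + s p) dy` of the Gagliardo seminorm. -/
noncomputable def gagliardoDensity (μ : Measure E) (s p : ℝ) (g : E → F) (x : E) : ℝ≥0∞ :=
  ∫⁻ y, ‖g x - g y‖ₑ ^ p / ENNReal.ofReal ‖x - y‖ ^ ((finrank ℝ E : ℝ) + s * p) ∂μ

variable [BorelSpace E] [FiniteDimensional ℝ E] {g : E → F}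

lemma measurable_gagliardoIntegrand (hg : Continuous g) (s p : ℝ) :
    Measurable (Function.uncurry fun x y : E => ‖g x - g y‖ₑ ^ p /
      ENNReal.ofReal ‖x - y‖ ^ ((finrank ℝ E : ℝ) + s * p)) := by
  have hnum : Measurable fun z : E × E => ‖g z.1 - g z.2‖ₑ :=
    ((hg.comp continuous_fst).sub (hg.comp continuous_snd)).enorm.measurable
  simp only [Function.uncurry_def]
  fun_prop

variable (μ : Measure E) [μ.IsAddHaarMeasure]

lemma measurable_gagliardoDensity (hg : Continuous g) (s p : ℝ) :
    Measurable (gagliardoDensity μ s p g) :=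
  (measurable_gagliardoIntegrand hg s p).lintegral_prod_right'

lemma half_enorm_rpow_le_gagliardoDensity (hg : Continuous g) {s p : ℝ} (hs : 0 ≤ s) (hp : 1 ≤ p)
    {x : E} {r : ℝ} (hr : 0 < r) (hav : ballAverage μ (fun y => ‖g y‖ₑ) x r ≤ ‖g x‖ₑ / 2) :
    (‖g x‖ₑ / 2) ^ p ≤
      (μ (closedBall 0 1))⁻¹ * (ENNReal.ofReal r ^ (s * p) * gagliardoDensity μ s p g x) := by
  have hp₀ : 0 < p := by linarith
  have hr₀ : ENNReal.ofReal r ≠ 0 := by simpa using hr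
  have hdiff : Measurable fun y => ‖g x - g y‖ₑ := (continuous_const.sub hg).enorm.measurable
  have hkernel : ∀ y, ‖x - y‖ ≤ r → ‖g x - g y‖ₑ ^ p ≤
      ENNReal.ofReal r ^ ((finrank ℝ E : ℝ) + s * p) *
        (‖g x - g y‖ₑ ^ p / ENNReal.ofReal ‖x - y‖ ^ ((finrank ℝ E : ℝ) + s * p)) := by
    intro y hy
    refine le_mul_div_of_le ?_ (by finiteness) (by gcongr)
    rcases eq_or_ne x y with rfl | hxy
    · simp [hp₀]
    · have : ENNReal.ofReal ‖x - y‖ ≠ 0 := by simpa [sub_eq_zero] using hxy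
      exact .inl (by positivity)
  have hosc : ‖g x‖ₑ / 2 ≤ ballAverage μ (fun y => ‖g x - g y‖ₑ) x r :=
    half_enorm_le_lintegral_enorm_sub (hg.comp (by fun_prop)).aestronglyMeasurable hav
  rw [← ENNReal.mul_le_mul_iff_right (a := ENNReal.ofReal r ^ finrank ℝ E) (by positivity)
    (by finiteness)]
  calc ENNReal.ofReal r ^ finrank ℝ E * (‖g x‖ₑ / 2) ^ p
      ≤ ENNReal.ofReal r ^ finrank ℝ E * ballAverage μ (fun y => ‖g x - g y‖ₑ ^ p) x r := by
        gcongr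
        exact (ENNReal.rpow_le_rpow hosc hp₀.le).trans (ballAverage_rpow_le μ hdiff hp x r)
    _ ≤ _ := ofReal_pow_mul_ballAverage_le μ (by fun_prop) hr hkernel
    _ = _ := by
        rw [lintegral_const_mul _ (by fun_prop), ← gagliardoDensity,
          ENNReal.rpow_add _ _ hr₀ (by finiteness), ENNReal.rpow_natCast]
        ring

variable {γ θ p q s α β₁ β₂ : ℝ}
  (h : SobolevRieszExponents (finrank ℝ E) γ θ p q s α β₁ β₂) (hs : 0 < s)

include h hs

lemma exists_radius_ballAverage_le {G : E → ℝ≥0∞} (hG : Measurable G) {x : E} {A : ℝ≥0∞}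
    (hA₀ : A ≠ 0) (hA : A ≠ ∞) (hN₀ : localEnergy μ γ q α θ β₂ G x 0 ≠ 0)
    (hN : localEnergy μ γ q α θ β₂ G x 0 ≠ ∞) :
    ∃ r > 0, ballAverage μ G x r ≤ A ∧ A ^ (γ * θ + q * β₂) * ENNReal.ofReal r ^ (s * p * β₁) =
      averagingConst μ α θ β₂ * localEnergy μ γ q α θ β₂ G x 0 := by
  have hpos := h.averaging_pos hs
  obtain ⟨r, hr, heq⟩ := exists_pos_mul_ofReal_rpow_eq (c := A ^ (γ * θ + q * β₂)) (by positivity)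
    (by finiteness) (mul_ne_zero (averagingConst_ne_zero μ α θ β₂) hN₀)
    (ENNReal.mul_ne_top (averagingConst_ne_top μ α θ β₂) hN)
    (h.scaling_pos hs)
  refine ⟨r, hr, ?_, h.scaling ▸ heq⟩
  refine ballAverage_le_of_averagingConst_mul_localEnergy_le μ hG h.one_le_γ h.one_le_q h.α_pos.le
    h.α_le h.θ_nonneg h.β₂_nonneg hpos hr (heq ▸ ?_)
  gcongr
  exact localEnergy_le_localEnergy μ h.α_le h.β₂_nonneg G (by simpa using hr.le)

lemma enorm_rpow_le_gagliardoDensity_mul_localEnergy (hg : Continuous g) {x : E}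
    (hN₀ : localEnergy μ γ q α θ β₂ (fun y => ‖g y‖ₑ) x 0 ≠ 0)
    (hN : localEnergy μ γ q α θ β₂ (fun y => ‖g y‖ₑ) x 0 ≠ ∞) :
    ‖g x‖ₑ ^ (p * β₁ + (γ * θ + q * β₂)) ≤
      2 ^ (p * β₁ + (γ * θ + q * β₂)) * (μ (closedBall 0 1))⁻¹ ^ β₁ * averagingConst μ α θ β₂ *
        (gagliardoDensity μ s p g x ^ β₁ * localEnergy μ γ q α θ β₂ (fun y => ‖g y‖ₑ) x 0) := by
  have hΘ := h.averaging_pos hs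
  have hp := h.p_pos
  have hβ₁ := h.β₁_pos
  rcases eq_or_ne (g x) 0 with hx | hx
  · rw [hx, enorm_zero, ENNReal.zero_rpow_of_pos (by positivity)]
    exact zero_le
  set A := ‖g x‖ₑ / 2 with hA
  have hA₀ : A ≠ 0 := by simpa [hA] using hx
  have hAt : A ≠ ∞ := by finiteness
  obtain ⟨r, hr, hav, heq⟩ := exists_radius_ballAverage_le μ h hs hg.enorm.measurable hA₀ hAt hN₀ hN
  calc ‖g x‖ₑ ^ (p * β₁ + (γ * θ + q * β₂))
      = 2 ^ (p * β₁ + (γ * θ + q * β₂)) * ((A ^ p) ^ β₁ * A ^ (γ * θ + q * β₂)) := by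
        rw [← ENNReal.rpow_mul, ← ENNReal.rpow_add _ _ hA₀ hAt,
          ← ENNReal.mul_rpow_of_nonneg _ _ (by positivity), hA,
          ENNReal.mul_div_cancel two_ne_zero ENNReal.ofNat_ne_top]
    _ ≤ 2 ^ (p * β₁ + (γ * θ + q * β₂)) * (((μ (closedBall 0 1))⁻¹ *
        (ENNReal.ofReal r ^ (s * p) * gagliardoDensity μ s p g x)) ^ β₁ *
          A ^ (γ * θ + q * β₂)) := by
        gcongr
        exact half_enorm_rpow_le_gagliardoDensity μ hg hs.le h.one_le_p hr hav
    _ = 2 ^ (p * β₁ + (γ * θ + q * β₂)) * ((μ (closedBall 0 1))⁻¹ ^ β₁ *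
        gagliardoDensity μ s p g x ^ β₁ *
          (A ^ (γ * θ + q * β₂) * ENNReal.ofReal r ^ (s * p * β₁))) := by
        rw [ENNReal.mul_rpow_of_nonneg _ _ h.β₁_pos.le, ENNReal.mul_rpow_of_nonneg _ _ h.β₁_pos.le,
          ← ENNReal.rpow_mul]
        ring
    _ = _ := by
        rw [heq]
        ring

theorem exists_rpow_lintegral_le_gagliardo (F : Type*) [NormedAddCommGroup F] : ∃ C ≠ ∞,
    ∀ g : E → F, Continuous g → HasCompactSupport g → (∫⁻ x, ‖g x‖ₑ ^ γ ∂μ) ^ (1 / γ) ≤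
      C * ((∫⁻ x, gagliardoDensity μ s p g x ∂μ) ^ β₁ * eRieszEnergy μ q α g ^ β₂) := by
  have hv := inv_measure_unitBall_ne_top μ
  have hA := averagingConst_ne_top μ α θ β₂
  have hβ₁ := h.β₁_pos
  refine ⟨2 ^ (p * β₁ + (γ * θ + q * β₂)) * (μ (closedBall 0 1))⁻¹ ^ β₁ *
    averagingConst μ α θ β₂, by finiteness, fun g hg hgs => ?_⟩
  rcases eq_or_ne g 0 with rfl | hg₀
  · simp [h.γ_pos]
  · exact rpow_lintegral_le_of_enorm_rpow_le μ hg h hgs (measurable_gagliardoDensity μ hg s p)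
      fun x => enorm_rpow_le_gagliardoDensity_mul_localEnergy μ h hs hg
        (localEnergy_ne_zero μ hg h hg₀ x 0) (localEnergy_ne_top μ hg h hgs x le_rfl)

end FractionalCase

section LipschitzRadius

variable {X : Type*} [PseudoMetricSpace X]

lemma lipschitzWith_sInf {S : X → Set ℝ} {K : ℝ≥0} (hne : ∀ x, (S x).Nonempty)
    (hbdd : ∀ x, BddBelow (S x)) (hS : ∀ x x', ∀ ρ ∈ S x, ρ + K * dist x x' ∈ S x') :
    LipschitzWith K fun x => sInf (S x) := by
  refine LipschitzWith.of_le_add_mul K fun x x' => ?_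
  rw [← sub_le_iff_le_add]
  refine le_csInf (hne x') fun ρ hρ => ?_
  rw [sub_le_iff_le_add, dist_comm]
  exact csInf_le (hbdd x) (hS x' x ρ hρ)

variable {N : X → ℝ → ℝ≥0∞} (hN : ∀ x x' ρ ρ', ρ + dist x x' ≤ ρ' → N x' ρ' ≤ N x ρ)
  (hN₀ : ∀ x, ∀ ρ ≥ 0, N x ρ ≠ 0) (hNt : ∀ x, ∀ ρ ≥ 0, N x ρ ≠ ∞) {h : ℝ} (hh : 0 < h) {c : ℝ≥0∞}
  (hc₀ : c ≠ 0) (hc : c ≠ ∞)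

include hN hN₀ hNt hh hc₀ hc

lemma exists_mem_and_exists_pos_le_of_antitone (x : X) :
    {ρ | 0 < ρ ∧ N x (4 * ρ) ≤ c * ENNReal.ofReal ρ ^ h}.Nonempty ∧
      ∃ δ > 0, ∀ ρ ∈ {ρ | 0 < ρ ∧ N x (4 * ρ) ≤ c * ENNReal.ofReal ρ ^ h}, δ ≤ ρ := by
  have hmono : ∀ ρ ρ', ρ ≤ ρ' → N x ρ' ≤ N x ρ := fun ρ ρ' hρ => hN x x ρ ρ' (by simpa using hρ)
  constructor
  · obtain ⟨r, hr, heq⟩ := exists_pos_mul_ofReal_rpow_eq hc₀ hc (hN₀ x 0 le_rfl) (hNt x 0 le_rfl) hh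
    exact ⟨r, hr, heq ▸ hmono _ _ (by positivity)⟩
  · obtain ⟨r, hr, heq⟩ := exists_pos_mul_ofReal_rpow_eq hc₀ hc (hN₀ x 4 (by norm_num))
      (hNt x 4 (by norm_num)) hh
    refine ⟨min 1 r, by positivity, ?_⟩
    rintro ρ ⟨hρ, hle⟩
    rcases le_total 1 ρ with hρ₁ | hρ₁
    · exact min_le_of_left_le hρ₁
    · have hrρ := heq.trans_le ((hmono (4 * ρ) 4 (by linarith)).trans hle)
      rw [ENNReal.mul_le_mul_iff_right hc₀ hc, ENNReal.rpow_le_rpow_iff hh,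
        ENNReal.ofReal_le_ofReal_iff hρ.le] at hrρ
      exact min_le_of_right_le hrρ

lemma exists_lipschitzWith_half_threshold : ∃ R : X → ℝ, LipschitzWith (1 / 2) R ∧ (∀ x, 0 < R x) ∧
    (∀ x, N x (4 * R x) ≤ c * ENNReal.ofReal (R x) ^ h) ∧
      ∀ x, c * ENNReal.ofReal (R x) ^ h ≤ 4 ^ h * N x 0 := by
  set S : X → Set ℝ := fun x => {ρ | 0 < ρ ∧ N x (4 * ρ) ≤ c * ENNReal.ofReal ρ ^ h}
  have hne : ∀ x, (S x).Nonempty := fun x =>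
    (exists_mem_and_exists_pos_le_of_antitone hN hN₀ hNt hh hc₀ hc x).1
  have hlow : ∀ x, ∃ δ > 0, ∀ ρ ∈ S x, δ ≤ ρ := fun x =>
    (exists_mem_and_exists_pos_le_of_antitone hN hN₀ hNt hh hc₀ hc x).2
  have hbdd : ∀ x, BddBelow (S x) := fun x => (hlow x).imp fun δ hδ => hδ.2
  have hpos : ∀ x, 0 < sInf (S x) := fun x =>
    let ⟨_, hδ, hle⟩ := hlow x
    hδ.trans_le (le_csInf (hne x) hle)
  have hup : ∀ x x' ρ ρ', ρ ∈ S x → ρ + (1 / 4 : ℝ≥0) * dist x x' ≤ ρ' → ρ' ∈ S x' := by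
    rintro x x' ρ ρ' ⟨hρ, hle⟩ hρ'
    push_cast at hρ'
    have hρρ' : ρ ≤ ρ' := by linarith [dist_nonneg (x := x) (y := x')]
    refine ⟨hρ.trans_le hρρ', (hN x x' (4 * ρ) (4 * ρ') (by linarith)).trans (hle.trans ?_)⟩
    gcongr
  refine ⟨fun x => 2 * sInf (S x), ?_, fun x => mul_pos two_pos (hpos x), fun x => ?_, fun x => ?_⟩
  · refine LipschitzWith.of_dist_le_mul fun x x' => ?_
    have hlip := (lipschitzWith_sInf hne hbdd fun x x' ρ hρ => hup x x' ρ _ hρ le_rfl).dist_le_mul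
      x x'
    rw [Real.dist_eq, ← mul_sub, abs_mul, abs_two, ← Real.dist_eq]
    push_cast at hlip ⊢
    linarith
  · obtain ⟨ρ, hρ, hlt⟩ := exists_lt_of_csInf_lt (hne x)
      (show sInf (S x) < 2 * sInf (S x) by linarith [hpos x])
    exact (hup x x ρ _ hρ (by simpa using hlt.le)).2
  · have hhalf : 0 < sInf (S x) / 2 := half_pos (hpos x)
    have hnot : sInf (S x) / 2 ∉ S x := notMem_of_lt_csInf (half_lt_self (hpos x)) (hbdd x)
    have hlt : c * ENNReal.ofReal (sInf (S x) / 2) ^ h < N x (4 * (sInf (S x) / 2)) :=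
      not_le.1 fun hle => hnot ⟨hhalf, hle⟩
    calc c * ENNReal.ofReal (2 * sInf (S x)) ^ h
        = 4 ^ h * (c * ENNReal.ofReal (sInf (S x) / 2) ^ h) := by
          rw [show 2 * sInf (S x) = 4 * (sInf (S x) / 2) by ring, ENNReal.ofReal_mul (by norm_num),
            ENNReal.mul_rpow_of_nonneg _ _ hh.le, ENNReal.ofReal_ofNat, mul_left_comm]
      _ ≤ 4 ^ h * N x 0 := by
          gcongr
          exact hlt.le.trans (hN x x _ _ (by simpa using hhalf.le))

end LipschitzRadius

section DisplacementMaps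

variable {E : Type*} [NormedAddCommGroup E] [NormedSpace ℝ E] [MeasurableSpace E] [BorelSpace E]
  [FiniteDimensional ℝ E] (μ : Measure E) [μ.IsAddHaarMeasure]

lemma map_addHaar_le_of_antilipschitzWith {T : E → E} {K : ℝ≥0} (hT : AntilipschitzWith K T)
    (hTm : Measurable T) : μ.map T ≤ (K : ℝ≥0∞) ^ finrank ℝ E • μ := by
  refine Measure.le_iff.2 fun s hs => ?_
  have hH := hT.hausdorffMeasure_preimage_le (d := finrank ℝ E) (by positivity) s
  rw [ENNReal.rpow_natCast] at hH
  rw [Measure.map_apply hTm hs, Measure.isAddLeftInvariant_eq_smul μ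
    (Measure.hausdorffMeasure (finrank ℝ E : ℝ))]
  simp only [Measure.smul_apply, ENNReal.smul_def, smul_eq_mul]
  rw [mul_left_comm]
  gcongr

variable {R : E → ℝ} (hR : LipschitzWith (1 / 2) R)

include hR

lemma lintegral_comp_add_smul_le {v : E} (hv : ‖v‖ ≤ 1) {f : E → ℝ≥0∞} (hf : Measurable f) :
    ∫⁻ x, f (x + R x • v) ∂μ ≤ 2 ^ finrank ℝ E * ∫⁻ x, f x ∂μ := by
  have hRc := hR.continuous
  have hdisp : LipschitzWith (1 / 2) fun x => R x • v := LipschitzWith.of_dist_le_mul fun x y => by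
    rw [dist_eq_norm, dist_eq_norm, ← sub_smul, norm_smul]
    exact (mul_le_of_le_one_right (norm_nonneg _) hv).trans (hR.norm_sub_le x y)
  have hK : ((1 : ℝ≥0)⁻¹ - 1 / 2)⁻¹ = 2 := by
    rw [inv_one, one_div, NNReal.sub_def]
    norm_num [← NNReal.coe_inj]
  have hanti : AntilipschitzWith 2 fun x => x + R x • v :=
    hK ▸ AntilipschitzWith.id.add_lipschitzWith hdisp (by norm_num [← NNReal.coe_lt_coe])
  calc ∫⁻ x, f (x + R x • v) ∂μ = ∫⁻ y, f y ∂μ.map fun x => x + R x • v :=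
        (lintegral_map hf (by fun_prop)).symm
    _ ≤ ∫⁻ y, f y ∂((2 : ℝ≥0∞) ^ finrank ℝ E • μ) :=
        lintegral_mono' (map_addHaar_le_of_antilipschitzWith μ hanti (by fun_prop)) le_rfl
    _ = _ := lintegral_smul_measure _ _

variable {F : Type*} [NormedAddCommGroup F] [NormedSpace ℝ F]

omit hR [MeasurableSpace E] [BorelSpace E] [FiniteDimensional ℝ E] in
lemma enorm_sub_le_lintegral_fderiv {φ : E → F} (hφ : ContDiff ℝ 1 φ) (x v : E) :
    ‖φ (x + v) - φ x‖ₑ ≤ ‖v‖ₑ * ∫⁻ θ in Icc (0 : ℝ) 1, ‖fderiv ℝ φ (x + θ • v)‖ₑ := by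
  have h := enorm_sub_le_lintegral_deriv_of_contDiffOn_Icc (f := fun θ : ℝ => φ (x + θ • v))
    (hφ.comp (by fun_prop)).contDiffOn zero_le_one
  simp only [one_smul, zero_smul, add_zero] at h
  rw [← lintegral_const_mul' _ _ enorm_ne_top]
  refine h.trans (lintegral_mono fun θ => ?_)
  have hline : HasDerivAt (fun θ : ℝ => x + θ • v) v θ := by
    simpa using ((hasDerivAt_id θ).smul_const v).const_add x
  have hcomp : HasDerivAt (fun θ : ℝ => φ (x + θ • v)) (fderiv ℝ φ (x + θ • v) v) θ :=
    (hφ.differentiable one_ne_zero _).hasFDerivAt.comp_hasDerivAt θ hline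
  rw [hcomp.deriv, mul_comm]
  exact ContinuousLinearMap.le_opENorm _ _

lemma lintegral_enorm_sub_div_rpow_le {φ : E → F} (hφ : ContDiff ℝ 1 φ) (hR₀ : ∀ x, 0 < R x) {p : ℝ}
    (hp : 1 ≤ p) {w : E} (hw : ‖w‖ ≤ 1) :
    ∫⁻ x, (‖φ x - φ (x + R x • w)‖ₑ / ENNReal.ofReal (R x)) ^ p ∂μ ≤
      2 ^ finrank ℝ E * ∫⁻ x, ‖fderiv ℝ φ x‖ₑ ^ p ∂μ := by
  have hRc := hR.continuous
  have hfd : Continuous fun x => ‖fderiv ℝ φ x‖ₑ := (hφ.continuous_fderiv one_ne_zero).enorm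
  have : IsProbabilityMeasure (volume.restrict (Icc (0 : ℝ) 1)) := ⟨by simp⟩
  have hpt : ∀ x, (‖φ x - φ (x + R x • w)‖ₑ / ENNReal.ofReal (R x)) ^ p ≤
      ∫⁻ θ in Icc (0 : ℝ) 1, ‖fderiv ℝ φ (x + R x • θ • w)‖ₑ ^ p := by
    intro x
    have hstep : ‖R x • w‖ₑ ≤ ENNReal.ofReal (R x) := by
      rw [← ofReal_norm, norm_smul, Real.norm_of_nonneg (hR₀ x).le]
      exact ENNReal.ofReal_le_ofReal (mul_le_of_le_one_right (hR₀ x).le hw)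
    have hdiff := enorm_sub_le_lintegral_fderiv hφ x (R x • w)
    rw [← enorm_neg, neg_sub] at hdiff
    simp only [smul_comm _ (R x) w] at hdiff
    have hcont : Continuous fun θ : ℝ => ‖fderiv ℝ φ (x + R x • θ • w)‖ₑ := hfd.comp (by fun_prop)
    refine le_trans ?_ (lintegral_rpow_le_lintegral_rpow _ hp hcont.measurable)
    gcongr
    refine ENNReal.div_le_of_le_mul' (hdiff.trans ?_)
    gcongr
  calc _ ≤ ∫⁻ x, (∫⁻ θ in Icc (0 : ℝ) 1, ‖fderiv ℝ φ (x + R x • θ • w)‖ₑ ^ p) ∂μ :=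
        lintegral_mono hpt
    _ = ∫⁻ θ in Icc (0 : ℝ) 1, ∫⁻ x, ‖fderiv ℝ φ (x + R x • θ • w)‖ₑ ^ p ∂μ := by
        have hjoint : Continuous fun z : E × ℝ => ‖fderiv ℝ φ (z.1 + R z.1 • z.2 • w)‖ₑ :=
          hfd.comp (by fun_prop)
        exact lintegral_lintegral_swap (f := fun x θ => ‖fderiv ℝ φ (x + R x • θ • w)‖ₑ ^ p)
          (hjoint.measurable.pow_const p).aemeasurable
    _ ≤ ∫⁻ _ in Icc (0 : ℝ) 1, 2 ^ finrank ℝ E * ∫⁻ x, ‖fderiv ℝ φ x‖ₑ ^ p ∂μ := by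
        refine setLIntegral_mono' measurableSet_Icc fun θ hθ =>
          lintegral_comp_add_smul_le μ hR ?_ (hfd.measurable.pow_const p)
        rw [norm_smul, Real.norm_of_nonneg hθ.1]
        exact mul_le_one₀ hθ.2 (norm_nonneg w) hw
    _ = _ := by simp

lemma lintegral_ballAverage_enorm_sub_div_rpow_le {φ : E → F} (hφ : ContDiff ℝ 1 φ)
    (hR₀ : ∀ x, 0 < R x) {p : ℝ} (hp : 1 ≤ p) :
    ∫⁻ x, (ballAverage μ (fun y => ‖φ x - φ y‖ₑ) x (R x) / ENNReal.ofReal (R x)) ^ p ∂μ ≤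
      2 ^ finrank ℝ E * ∫⁻ x, ‖fderiv ℝ φ x‖ₑ ^ p ∂μ := by
  have hRc := hR.continuous
  have hR₀' : ∀ x, ENNReal.ofReal (R x) ≠ 0 := fun x => by simpa using hR₀ x
  calc _ ≤ ∫⁻ x, ∫⁻ w, (‖φ x - φ (x + R x • w)‖ₑ / ENNReal.ofReal (R x)) ^ p
        ∂unitBallMeasure μ ∂μ := by
        refine lintegral_mono fun x => ?_
        have hx : Continuous fun w => ‖φ x - φ (x + R x • w)‖ₑ := by fun_prop
        simp only [ballAverage, div_eq_mul_inv, ← lintegral_mul_const' _ _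
          (ENNReal.inv_ne_top.2 (hR₀' x))]
        exact lintegral_rpow_le_lintegral_rpow _ hp (hx.measurable.mul_const _)
    _ = ∫⁻ w, ∫⁻ x, (‖φ x - φ (x + R x • w)‖ₑ / ENNReal.ofReal (R x)) ^ p ∂μ
        ∂unitBallMeasure μ :=
        lintegral_lintegral_swap (by
          unfold Function.uncurry
          fun_prop)
    _ ≤ ∫⁻ _, 2 ^ finrank ℝ E * ∫⁻ x, ‖fderiv ℝ φ x‖ₑ ^ p ∂μ ∂unitBallMeasure μ := by
        refine lintegral_mono_ae ?_
        filter_upwards [ae_norm_le_one_unitBallMeasure μ] with w hw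
        exact lintegral_enorm_sub_div_rpow_le μ hR hφ hR₀ hp hw
    _ = _ := by simp

end DisplacementMaps

section LevelTruncation

/-- A smooth step in `|u|`, equal to `0` for `|u| ≤ 1 / 4` and to `1` for `|u| ≥ 1`, with which a
function is truncated to the annulus `t / 4 < |g| ≤ t` between two levels. -/
noncomputable def annularCutoff (u : ℝ) : ℝ :=
  smoothTransition ((16 * u ^ 2 - 1) / 15)

lemma contDiff_annularCutoff : ContDiff ℝ 1 annularCutoff :=
  smoothTransition.contDiff.comp (by fun_prop)

lemma annularCutoff_eq_one {u : ℝ} (hu : 1 ≤ |u|) : annularCutoff u = 1 :=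
  smoothTransition.one_of_one_le <| by
    rw [le_div_iff₀ (by norm_num), ← sq_abs]
    nlinarith

lemma annularCutoff_eq_zero {u : ℝ} (hu : |u| ≤ 1 / 4) : annularCutoff u = 0 :=
  smoothTransition.zero_of_nonpos <| by
    rw [← sq_abs]
    nlinarith [abs_nonneg u]

lemma abs_annularCutoff_le (u : ℝ) : |annularCutoff u| ≤ 4 * |u| := by
  rcases le_total |u| (1 / 4) with hu | hu
  · simp [annularCutoff_eq_zero hu]
  · rw [annularCutoff, abs_of_nonneg (smoothTransition.nonneg _)]
    linarith [smoothTransition.le_one ((16 * u ^ 2 - 1) / 15)]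

lemma mem_Ioc_of_deriv_annularCutoff_ne_zero {u : ℝ} (hu : deriv annularCutoff u ≠ 0) :
    |u| ∈ Ioc (1 / 4) 1 := by
  constructor <;> by_contra! h
  · refine hu (IsLocalMin.deriv_eq_zero (.of_forall fun v => ?_))
    rw [annularCutoff_eq_zero h]
    exact smoothTransition.nonneg _
  · refine hu (IsLocalMax.deriv_eq_zero (.of_forall fun v => ?_))
    rw [annularCutoff_eq_one h.le]
    exact smoothTransition.le_one _

lemma exists_enorm_deriv_annularCutoff_le : ∃ L : ℝ≥0, ∀ u, ‖deriv annularCutoff u‖ₑ ≤ L := by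
  obtain ⟨L, hL⟩ := (isCompact_Icc (a := (-1 : ℝ)) (b := 1)).exists_bound_of_continuousOn
    (contDiff_annularCutoff.continuous_deriv le_rfl).continuousOn
  refine ⟨L.toNNReal, fun u => ?_⟩
  by_cases hu : deriv annularCutoff u = 0
  · simp [hu]
  · rw [← ofReal_norm]
    exact ENNReal.ofReal_le_ofReal (hL u (abs_le.1 (mem_Ioc_of_deriv_annularCutoff_ne_zero hu).2))

variable {E : Type*} [NormedAddCommGroup E] [NormedSpace ℝ E] {g : E → ℝ} (hg : ContDiff ℝ 1 g)
  {L : ℝ≥0} (hL : ∀ u, ‖deriv annularCutoff u‖ₑ ≤ L) {p : ℝ} (hp : 1 ≤ p) {t : ℝ} (ht : 0 < t)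

include hg hL hp ht

lemma enorm_fderiv_annularCutoff_rpow_le (x : E) :
    ‖fderiv ℝ (fun y => t * annularCutoff (g y / t)) x‖ₑ ^ p ≤
      L ^ p * indicator {x | |g x| ∈ Ioc (t / 4) t} (fun x => ‖fderiv ℝ g x‖ₑ ^ p) x := by
  have hp₀ : 0 < p := by linarith
  have hfd : HasFDerivAt (fun y => t * annularCutoff (g y / t))
      (deriv annularCutoff (g x / t) • fderiv ℝ g x) x := by
    have hscale : HasFDerivAt (fun y => g y / t) (t⁻¹ • fderiv ℝ g x) x := by
      simpa [div_eq_mul_inv] using (hg.differentiable one_ne_zero x).hasFDerivAt.mul_const t⁻¹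
    have hchain := ((contDiff_annularCutoff.differentiable one_ne_zero
      (g x / t)).hasDerivAt.comp_hasFDerivAt x hscale).const_mul t
    rwa [smul_comm, smul_inv_smul₀ ht.ne'] at hchain
  rw [hfd.fderiv, enorm_smul]
  by_cases hx : |g x| ∈ Ioc (t / 4) t
  · rw [indicator_of_mem (by exact hx), ← ENNReal.mul_rpow_of_nonneg _ _ hp₀.le]
    gcongr
    exact hL _
  · have hzero : deriv annularCutoff (g x / t) = 0 := by
      by_contra hne
      have hmem := mem_Ioc_of_deriv_annularCutoff_ne_zero hne
      rw [abs_div, abs_of_pos ht, mem_Ioc, lt_div_iff₀ ht, div_le_iff₀ ht] at hmem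
      exact hx ⟨by linarith [hmem.1], by linarith [hmem.2]⟩
    simp [hzero, hp₀]

variable [MeasurableSpace E] [BorelSpace E] [FiniteDimensional ℝ E] (μ : Measure E)
  [μ.IsAddHaarMeasure]

omit hL hp in
lemma half_le_ballAverage_annularCutoff {x : E} {r : ℝ} (hx : t ≤ |g x|)
    (hav : ballAverage μ (fun y => ‖g y‖ₑ) x r ≤ ENNReal.ofReal (t / 8)) :
    ENNReal.ofReal t / 2 ≤ ballAverage μ
      (fun y => ‖t * annularCutoff (g x / t) - t * annularCutoff (g y / t)‖ₑ) x r := by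
  have hΦ := contDiff_annularCutoff.continuous
  have hone : ‖t * annularCutoff (g x / t)‖ₑ = ENNReal.ofReal t := by
    rw [annularCutoff_eq_one (by rwa [abs_div, abs_of_pos ht, one_le_div ht]), mul_one,
      Real.enorm_of_nonneg ht.le]
  have hle : ∀ y, ‖t * annularCutoff (g y / t)‖ₑ ≤ 4 * ‖g y‖ₑ := by
    intro y
    have hy := abs_annularCutoff_le (g y / t)
    rw [abs_div, abs_of_pos ht, ← mul_div_assoc, le_div_iff₀ ht] at hy
    rw [← ofReal_norm, ← ofReal_norm, ← ENNReal.ofReal_ofNat, ← ENNReal.ofReal_mul (by norm_num),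
      norm_mul, Real.norm_of_nonneg ht.le, mul_comm]
    exact ENNReal.ofReal_le_ofReal hy
  have hmean : ballAverage μ (fun y => ‖t * annularCutoff (g y / t)‖ₑ) x r ≤
      ENNReal.ofReal t / 2 :=
    calc _ ≤ ∫⁻ w, 4 * ‖g (x + r • w)‖ₑ ∂unitBallMeasure μ := lintegral_mono fun w => hle _
      _ = 4 * ballAverage μ (fun y => ‖g y‖ₑ) x r := lintegral_const_mul' _ _ (by finiteness)
      _ ≤ 4 * ENNReal.ofReal (t / 8) := by gcongr
      _ = ENNReal.ofReal t / 2 := by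
        rw [← ENNReal.ofReal_ofNat, ← ENNReal.ofReal_ofNat 2, ← ENNReal.ofReal_mul (by norm_num),
          ← ENNReal.ofReal_div_of_pos two_pos]
        ring_nf
  rw [← hone] at hmean ⊢
  exact half_enorm_le_lintegral_enorm_sub
    (f := fun w => t * annularCutoff (g (x + r • w) / t))
    (by fun_prop : Continuous _).aestronglyMeasurable hmean

lemma setLIntegral_level_div_radius_rpow_le {R : E → ℝ} (hR : LipschitzWith (1 / 2) R)
    (hR₀ : ∀ x, 0 < R x)
    (hav : ∀ x, ballAverage μ (fun y => ‖g y‖ₑ) x (R x) ≤ ENNReal.ofReal (t / 8)) :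
    ∫⁻ x in {x | t ≤ |g x|}, (ENNReal.ofReal t / ENNReal.ofReal (R x)) ^ p ∂μ ≤
      2 ^ p * (2 ^ finrank ℝ E * L ^ p) *
        ∫⁻ x in {x | |g x| ∈ Ioc (t / 4) t}, ‖fderiv ℝ g x‖ₑ ^ p ∂μ := by
  have hp₀ : 0 < p := by linarith
  have habs := hg.continuous.abs.measurable
  set φ : E → ℝ := fun y => t * annularCutoff (g y / t)
  have hφ : ContDiff ℝ 1 φ := contDiff_const.mul (contDiff_annularCutoff.comp (by fun_prop))
  have hosc : ∀ x ∈ {x | t ≤ |g x|}, (ENNReal.ofReal t / ENNReal.ofReal (R x)) ^ p ≤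
      2 ^ p * (ballAverage μ (fun y => ‖φ x - φ y‖ₑ) x (R x) / ENNReal.ofReal (R x)) ^ p := by
    intro x hx
    have hhalf := half_le_ballAverage_annularCutoff hg ht μ hx (hav x)
    rw [← ENNReal.mul_rpow_of_nonneg _ _ hp₀.le, ← mul_div_assoc]
    gcongr
    exact (ENNReal.div_le_iff_le_mul (by simp) (by simp)).1 hhalf |>.trans_eq (mul_comm _ _)
  calc _ ≤ ∫⁻ x in {x | t ≤ |g x|}, 2 ^ p *
        (ballAverage μ (fun y => ‖φ x - φ y‖ₑ) x (R x) / ENNReal.ofReal (R x)) ^ p ∂μ :=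
        setLIntegral_mono' (habs measurableSet_Ici) hosc
    _ ≤ ∫⁻ x, 2 ^ p *
        (ballAverage μ (fun y => ‖φ x - φ y‖ₑ) x (R x) / ENNReal.ofReal (R x)) ^ p ∂μ :=
        setLIntegral_le_lintegral _ _
    _ ≤ 2 ^ p * (2 ^ finrank ℝ E * ∫⁻ x, ‖fderiv ℝ φ x‖ₑ ^ p ∂μ) := by
        rw [lintegral_const_mul' _ _ (by finiteness)]
        gcongr
        exact lintegral_ballAverage_enorm_sub_div_rpow_le μ hR hφ hR₀ hp
    _ ≤ 2 ^ p * (2 ^ finrank ℝ E * ∫⁻ x, L ^ p *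
        indicator {x | |g x| ∈ Ioc (t / 4) t} (fun x => ‖fderiv ℝ g x‖ₑ ^ p) x ∂μ) := by
        gcongr with x
        exact enorm_fderiv_annularCutoff_rpow_le hg hL hp ht x
    _ = _ := by
        have hlevel : MeasurableSet {x | |g x| ∈ Ioc (t / 4) t} := habs measurableSet_Ioc
        rw [lintegral_const_mul' _ _ (by finiteness), lintegral_indicator hlevel]
        ring

end LevelTruncation

section DyadicLevels

variable {X : Type*} {p : ℝ}

/-- The function `∑ₖ 1_{|g| ≥ 4 ^ k} (4 ^ k / R k) ^ p`, which plays the role of the difference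
quotient `(|g| / r) ^ p` at a radius `r` depending on the dyadic level `4 ^ k` of `|g|`. -/
noncomputable def levelDensity (p : ℝ) (g : X → ℝ) (R : ℤ → X → ℝ) (x : X) : ℝ≥0∞ :=
  ∑' k : ℤ, indicator {x | (4 : ℝ) ^ k ≤ |g x|}
    (fun x => (ENNReal.ofReal (4 ^ k) / ENNReal.ofReal (R k x)) ^ p) x

lemma pairwise_disjoint_zpow_level (g : X → ℝ) :
    Pairwise (Function.onFun Disjoint fun k : ℤ =>
      {x | |g x| ∈ Ioc ((4 : ℝ) ^ k / 4) (4 ^ k)}) := by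
  have hmono : Monotone fun k : ℤ => (4 : ℝ) ^ k := fun i j hij =>
    zpow_le_zpow_right₀ (by norm_num) hij
  intro i j hij
  have hdisj := hmono.pairwise_disjoint_on_Ioc_pred hij
  simp only [Function.onFun, Order.pred_eq_sub_one, zpow_sub_one₀ (four_ne_zero' ℝ),
    ← div_eq_mul_inv] at hdisj
  exact hdisj.preimage fun x => |g x|

lemma rpow_le_levelDensity {g : X → ℝ} (R : ℤ → X → ℝ) {x : X} {k : ℤ} (hk : (4 : ℝ) ^ k ≤ |g x|) :
    (ENNReal.ofReal (4 ^ k) / ENNReal.ofReal (R k x)) ^ p ≤ levelDensity p g R x := by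
  refine le_of_eq_of_le ?_ (ENNReal.le_tsum k)
  rw [indicator_of_mem (by exact hk)]

lemma exists_zpow_level {u : ℝ} (hu : u ≠ 0) :
    ∃ k : ℤ, (4 : ℝ) ^ k ≤ |u| ∧ ‖u‖ₑ ≤ 4 * ENNReal.ofReal (4 ^ k) := by
  obtain ⟨k, hle, hlt⟩ := exists_mem_Ico_zpow (abs_pos.2 hu) (y := (4 : ℝ)) (by norm_num)
  refine ⟨k, hle, ?_⟩
  rw [zpow_add_one₀ four_ne_zero, mul_comm] at hlt
  rw [← ofReal_norm, ← ENNReal.ofReal_ofNat, ← ENNReal.ofReal_mul (by norm_num)]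
  exact ENNReal.ofReal_le_ofReal hlt.le

variable [TopologicalSpace X] [MeasurableSpace X] [OpensMeasurableSpace X]

lemma measurable_indicator_level {g : X → ℝ} (hg : Continuous g) {R : ℤ → X → ℝ}
    (hR : ∀ k, Continuous (R k)) (k : ℤ) :
    Measurable (indicator {x | (4 : ℝ) ^ k ≤ |g x|}
      fun x => (ENNReal.ofReal (4 ^ k) / ENNReal.ofReal (R k x)) ^ p) := by
  exact Measurable.indicator (by fun_prop) (hg.abs.measurable measurableSet_Ici)

lemma measurable_levelDensity {g : X → ℝ} (hg : Continuous g) {R : ℤ → X → ℝ}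
    (hR : ∀ k, Continuous (R k)) : Measurable (levelDensity p g R) :=
  Measurable.tsum (measurable_indicator_level hg hR)

end DyadicLevels

section GradientCase

lemma rpow_add_eq_div_rpow_rpow_mul {T r : ℝ≥0∞} (hT₀ : T ≠ 0) (hT : T ≠ ∞) (hr₀ : r ≠ 0)
    (hr : r ≠ ∞) {p b e : ℝ} (hpb : 0 ≤ p * b) :
    T ^ (p * b + e) = ((T / r) ^ p) ^ b * (T ^ e * r ^ (p * b)) := by
  rw [ENNReal.rpow_add _ _ hT₀ hT, ← ENNReal.rpow_mul, mul_left_comm,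
    ← ENNReal.mul_rpow_of_nonneg _ _ hpb, ENNReal.div_mul_cancel hr₀ hr, mul_comm]

variable {E : Type*} [NormedAddCommGroup E] [NormedSpace ℝ E] [MeasurableSpace E]
  (μ : Measure E) {γ θ p q α β₁ β₂ : ℝ}

lemma enorm_rpow_le_levelDensity_mul_localEnergy {n : ℝ}
    (h : SobolevRieszExponents n γ θ p q 1 α β₁ β₂) {g : E → ℝ} {R : ℤ → E → ℝ}
    (hR₀ : ∀ k x, 0 < R k x) {x : E} (hR : ∀ k : ℤ, ENNReal.ofReal (4 ^ k / 8) ^ (γ * θ + q * β₂) *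
      ENNReal.ofReal (R k x) ^ (p * β₁) ≤ 4 ^ (p * β₁) * (averagingConst μ α θ β₂ *
        localEnergy μ γ q α θ β₂ (fun y => ‖g y‖ₑ) x 0)) :
    ‖g x‖ₑ ^ (p * β₁ + (γ * θ + q * β₂)) ≤
      4 ^ (p * β₁ + (γ * θ + q * β₂)) * 8 ^ (γ * θ + q * β₂) * 4 ^ (p * β₁) *
        averagingConst μ α θ β₂ * (levelDensity p g R x ^ β₁ *
          localEnergy μ γ q α θ β₂ (fun y => ‖g y‖ₑ) x 0) := by
  have hΘ := h.averaging_pos one_pos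
  have hp := h.p_pos
  have hβ₁ := h.β₁_pos
  rcases eq_or_ne (g x) 0 with hx | hx
  · rw [hx, enorm_zero, ENNReal.zero_rpow_of_pos (by positivity)]
    exact zero_le
  obtain ⟨k, hk, hgk⟩ := exists_zpow_level hx
  have hT₀ : ENNReal.ofReal (4 ^ k) ≠ 0 := by
    rw [ENNReal.ofReal_ne_zero_iff]
    positivity
  have hr₀ : ENNReal.ofReal (R k x) ≠ 0 := by simpa using hR₀ k x
  have hT : ENNReal.ofReal (4 ^ k) = 8 * ENNReal.ofReal (4 ^ k / 8) := by
    rw [← ENNReal.ofReal_ofNat, ← ENNReal.ofReal_mul (by norm_num), mul_div_cancel₀ _ (by norm_num)]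
  have hTΘ : ENNReal.ofReal (4 ^ k) ^ (γ * θ + q * β₂) =
      8 ^ (γ * θ + q * β₂) * ENNReal.ofReal (4 ^ k / 8) ^ (γ * θ + q * β₂) := by
    rw [hT, ENNReal.mul_rpow_of_nonneg _ _ hΘ.le]
  calc ‖g x‖ₑ ^ (p * β₁ + (γ * θ + q * β₂))
      ≤ (4 * ENNReal.ofReal (4 ^ k)) ^ (p * β₁ + (γ * θ + q * β₂)) := by gcongr
    _ = 4 ^ (p * β₁ + (γ * θ + q * β₂)) * 8 ^ (γ * θ + q * β₂) *
          (((ENNReal.ofReal (4 ^ k) / ENNReal.ofReal (R k x)) ^ p) ^ β₁ *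
            (ENNReal.ofReal (4 ^ k / 8) ^ (γ * θ + q * β₂) *
              ENNReal.ofReal (R k x) ^ (p * β₁))) := by
        rw [ENNReal.mul_rpow_of_nonneg _ _ (by positivity), rpow_add_eq_div_rpow_rpow_mul hT₀
          ENNReal.ofReal_ne_top hr₀ ENNReal.ofReal_ne_top (by positivity), hTΘ]
        ring
    _ ≤ 4 ^ (p * β₁ + (γ * θ + q * β₂)) * 8 ^ (γ * θ + q * β₂) *
          (levelDensity p g R x ^ β₁ * (4 ^ (p * β₁) * (averagingConst μ α θ β₂ *
            localEnergy μ γ q α θ β₂ (fun y => ‖g y‖ₑ) x 0))) := by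
        gcongr _ * (?_ ^ β₁ * ?_)
        · exact rpow_le_levelDensity R hk
        · exact hR k
    _ = _ := by ring

variable [BorelSpace E] [FiniteDimensional ℝ E] [μ.IsAddHaarMeasure]

lemma lintegral_levelDensity_le {g : E → ℝ} (hg : ContDiff ℝ 1 g) {L : ℝ≥0}
    (hL : ∀ u, ‖deriv annularCutoff u‖ₑ ≤ L) (hp : 1 ≤ p) {R : ℤ → E → ℝ}
    (hR : ∀ k, LipschitzWith (1 / 2) (R k)) (hR₀ : ∀ k x, 0 < R k x)
    (hav : ∀ k x, ballAverage μ (fun y => ‖g y‖ₑ) x (R k x) ≤ ENNReal.ofReal (4 ^ k / 8)) :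
    ∫⁻ x, levelDensity p g R x ∂μ ≤
      2 ^ p * (2 ^ finrank ℝ E * L ^ p) * ∫⁻ x, ‖fderiv ℝ g x‖ₑ ^ p ∂μ := by
  have habs := hg.continuous.abs.measurable
  calc ∫⁻ x, levelDensity p g R x ∂μ
      = ∑' k : ℤ, ∫⁻ x in {x | (4 : ℝ) ^ k ≤ |g x|},
          (ENNReal.ofReal (4 ^ k) / ENNReal.ofReal (R k x)) ^ p ∂μ := by
        unfold levelDensity
        rw [lintegral_tsum fun k => (measurable_indicator_level hg.continuous
          (fun k => (hR k).continuous) k).aemeasurable]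
        exact tsum_congr fun k => lintegral_indicator (habs measurableSet_Ici) _
    _ ≤ ∑' k : ℤ, 2 ^ p * (2 ^ finrank ℝ E * L ^ p) *
          ∫⁻ x in {x | |g x| ∈ Ioc ((4 : ℝ) ^ k / 4) (4 ^ k)}, ‖fderiv ℝ g x‖ₑ ^ p ∂μ :=
        ENNReal.tsum_le_tsum fun k => setLIntegral_level_div_radius_rpow_le hg hL hp
          (by positivity) μ (hR k) (hR₀ k) (hav k)
    _ = 2 ^ p * (2 ^ finrank ℝ E * L ^ p) *
          ∫⁻ x in ⋃ k : ℤ, {x | |g x| ∈ Ioc ((4 : ℝ) ^ k / 4) (4 ^ k)}, ‖fderiv ℝ g x‖ₑ ^ p ∂μ := by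
        have hlevel : ∀ k : ℤ, MeasurableSet {x | |g x| ∈ Ioc ((4 : ℝ) ^ k / 4) (4 ^ k)} :=
          fun k => habs measurableSet_Ioc
        rw [ENNReal.tsum_mul_left, lintegral_iUnion hlevel (pairwise_disjoint_zpow_level g)]
    _ ≤ _ := by
        gcongr _ * ?_
        exact setLIntegral_le_lintegral _ _

lemma exists_lipschitz_radius_ballAverage_le {s : ℝ}
    (h : SobolevRieszExponents (finrank ℝ E) γ θ p q s α β₁ β₂) (hs : 0 < s) {F : Type*}
    [NormedAddCommGroup F] {g : E → F} (hg : Continuous g) (hgs : HasCompactSupport g) (hg₀ : g ≠ 0)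
    {A : ℝ≥0∞} (hA₀ : A ≠ 0) (hA : A ≠ ∞) :
    ∃ R : E → ℝ, LipschitzWith (1 / 2) R ∧ (∀ x, 0 < R x) ∧
      (∀ x, ballAverage μ (fun y => ‖g y‖ₑ) x (R x) ≤ A) ∧
      ∀ x, A ^ (γ * θ + q * β₂) * ENNReal.ofReal (R x) ^ (s * p * β₁) ≤
        4 ^ (s * p * β₁) * (averagingConst μ α θ β₂ *
          localEnergy μ γ q α θ β₂ (fun y => ‖g y‖ₑ) x 0) := by
  have hpos := h.averaging_pos hs
  have hc₀ := averagingConst_ne_zero μ α θ β₂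
  have hc := averagingConst_ne_top μ α θ β₂
  obtain ⟨R, hR, hR₀, hle, hge⟩ := exists_lipschitzWith_half_threshold
    (N := fun x ρ => averagingConst μ α θ β₂ * localEnergy μ γ q α θ β₂ (fun y => ‖g y‖ₑ) x ρ)
    (fun x x' ρ ρ' hρ => by
      gcongr
      exact localEnergy_le_localEnergy μ h.α_le h.β₂_nonneg _ (dist_eq_norm x x' ▸ hρ))
    (fun x ρ _ => mul_ne_zero hc₀ (localEnergy_ne_zero μ hg h hg₀ x ρ))
    (fun x ρ hρ => ENNReal.mul_ne_top hc (localEnergy_ne_top μ hg h hgs x hρ))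
    (h.scaling_pos hs) (c := A ^ (γ * θ + q * β₂)) (by positivity) (by finiteness)
  exact ⟨R, hR, hR₀, fun x => ballAverage_le_of_averagingConst_mul_localEnergy_le μ
    hg.enorm.measurable h.one_le_γ h.one_le_q h.α_pos.le h.α_le h.θ_nonneg h.β₂_nonneg hpos (hR₀ x)
    (hle x), fun x => h.scaling ▸ hge x⟩

theorem exists_rpow_lintegral_le_fderiv
    (h : SobolevRieszExponents (finrank ℝ E) γ θ p q 1 α β₁ β₂) : ∃ C ≠ ∞, ∀ g : E → ℝ,
    ContDiff ℝ 1 g → HasCompactSupport g → (∫⁻ x, ‖g x‖ₑ ^ γ ∂μ) ^ (1 / γ) ≤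
      C * ((∫⁻ x, ‖fderiv ℝ g x‖ₑ ^ p ∂μ) ^ β₁ * eRieszEnergy μ q α g ^ β₂) := by
  obtain ⟨L, hL⟩ := exists_enorm_deriv_annularCutoff_le
  have hp := h.p_pos
  have hβ₁ := h.β₁_pos
  have hc := averagingConst_ne_top μ α θ β₂
  set C₁ : ℝ≥0∞ := 4 ^ (p * β₁ + (γ * θ + q * β₂)) * 8 ^ (γ * θ + q * β₂) * 4 ^ (p * β₁) *
    averagingConst μ α θ β₂
  set K : ℝ≥0∞ := 2 ^ p * (2 ^ finrank ℝ E * L ^ p)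
  refine ⟨C₁ * K ^ β₁, by finiteness, fun g hg hgs => ?_⟩
  rcases eq_or_ne g 0 with rfl | hg₀
  · simp [h.γ_pos]
  have hA₀ : ∀ k : ℤ, ENNReal.ofReal ((4 : ℝ) ^ k / 8) ≠ 0 := fun k => by
    rw [ENNReal.ofReal_ne_zero_iff]
    positivity
  choose R hR hR₀ hav henergy using fun k => exists_lipschitz_radius_ballAverage_le μ h one_pos
    hg.continuous hgs hg₀ (hA₀ k) ENNReal.ofReal_ne_top
  simp only [one_mul] at henergy
  calc _ ≤ C₁ * ((∫⁻ x, levelDensity p g R x ∂μ) ^ β₁ * eRieszEnergy μ q α g ^ β₂) :=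
        rpow_lintegral_le_of_enorm_rpow_le μ hg.continuous h hgs
          (measurable_levelDensity hg.continuous fun k => (hR k).continuous)
          fun x => enorm_rpow_le_levelDensity_mul_localEnergy μ h hR₀ fun k => henergy k x
    _ ≤ C₁ * ((K * ∫⁻ x, ‖fderiv ℝ g x‖ₑ ^ p ∂μ) ^ β₁ * eRieszEnergy μ q α g ^ β₂) := by
        gcongr
        exact lintegral_levelDensity_le μ hg hL h.one_le_p hR hR₀ hav
    _ = _ := by
        rw [ENNReal.mul_rpow_of_nonneg _ _ hβ₁.le]
        ring

end GradientCase

section EnergyFiniteness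

lemma lintegral_lintegral_le_two_mul_setLIntegral {X : Type*} [MeasurableSpace X] {ν : Measure X}
    [SFinite ν] {H : X → X → ℝ≥0∞} (hH : Measurable (Function.uncurry H))
    (hsymm : ∀ x y, H x y = H y x) {S : Set X} (hS : MeasurableSet S)
    (hzero : ∀ x ∉ S, ∀ y ∉ S, H x y = 0) :
    ∫⁻ x, ∫⁻ y, H x y ∂ν ∂ν ≤ 2 * ∫⁻ x in S, ∫⁻ y, H x y ∂ν ∂ν := by
  have hrestrict : ∀ x ∈ Sᶜ, ∫⁻ y, H x y ∂ν = ∫⁻ y in S, H x y ∂ν := fun x hx => by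
    rw [← lintegral_add_compl _ hS, setLIntegral_congr_fun hS.compl (hzero x hx), lintegral_zero,
      add_zero]
  have hcompl : ∫⁻ x in Sᶜ, ∫⁻ y, H x y ∂ν ∂ν ≤ ∫⁻ x in S, ∫⁻ y, H x y ∂ν ∂ν :=
    calc ∫⁻ x in Sᶜ, ∫⁻ y, H x y ∂ν ∂ν = ∫⁻ x in Sᶜ, ∫⁻ y in S, H x y ∂ν ∂ν :=
          setLIntegral_congr_fun hS.compl hrestrict
      _ = ∫⁻ y in S, ∫⁻ x in Sᶜ, H x y ∂ν ∂ν := lintegral_lintegral_swap hH.aemeasurable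
      _ ≤ ∫⁻ y in S, ∫⁻ x, H x y ∂ν ∂ν := by
          gcongr
          exact Measure.restrict_le_self
      _ = _ := by simp only [hsymm]
  rw [two_mul, ← lintegral_add_compl _ hS]
  gcongr

variable {E F : Type*} [NormedAddCommGroup E] [NormedSpace ℝ E] [MeasurableSpace E] [BorelSpace E]
  [FiniteDimensional ℝ E] (μ : Measure E) [μ.IsAddHaarMeasure] [NormedAddCommGroup F] {g : E → F}

lemma setLIntegral_compl_ball_inv_norm_rpow_ne_top {a : ℝ} (hna : finrank ℝ E < a) :
    ∫⁻ z in (ball (0 : E) 1)ᶜ, (ENNReal.ofReal ‖z‖ ^ a)⁻¹ ∂μ ≠ ∞ := by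
  have ha : 0 ≤ a := (Nat.cast_nonneg _).trans hna.le
  have hbracket := (finite_integral_one_add_norm (μ := μ) hna).ne
  refine ne_top_of_le_ne_top (b := 2 ^ a * ∫⁻ z, ENNReal.ofReal ((1 + ‖z‖) ^ (-a)) ∂μ)
    (by finiteness) ?_
  rw [← lintegral_const_mul' _ _ (by finiteness)]
  refine (setLIntegral_mono' measurableSet_ball.compl fun z hz => ?_).trans
    (setLIntegral_le_lintegral _ _)
  have hle : ENNReal.ofReal (1 + ‖z‖) ≤ 2 * ENNReal.ofReal ‖z‖ := by
    have hz₁ : 1 ≤ ‖z‖ := by simpa using hz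
    rw [← ENNReal.ofReal_ofNat, ← ENNReal.ofReal_mul (by norm_num)]
    exact ENNReal.ofReal_le_ofReal (by linarith)
  calc (ENNReal.ofReal ‖z‖ ^ a)⁻¹ = 2 ^ a * ((2 * ENNReal.ofReal ‖z‖) ^ a)⁻¹ := by
        rw [ENNReal.mul_rpow_of_nonneg _ _ ha, ENNReal.mul_inv (by simp) (by simp), ← mul_assoc,
          ENNReal.mul_inv_cancel (by positivity) (by finiteness), one_mul]
    _ ≤ 2 ^ a * (ENNReal.ofReal (1 + ‖z‖) ^ a)⁻¹ := by gcongr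
    _ = _ := by
        rw [← ENNReal.ofReal_rpow_of_pos (by positivity), ENNReal.rpow_neg]

lemma gagliardoDensity_le {L : ℝ≥0} (hL : LipschitzWith L g) {M : ℝ≥0∞}
    (hM : ∀ x, ‖g x‖ₑ ≤ M) {p : ℝ} (hp : 0 < p) (s : ℝ) (x : E) :
    gagliardoDensity μ s p g x ≤
      L ^ p * ∫⁻ z in ball (0 : E) 1, (ENNReal.ofReal ‖z‖ ^ (finrank ℝ E + s * p - p))⁻¹ ∂μ +
      (2 * M) ^ p *
        ∫⁻ z in (ball (0 : E) 1)ᶜ, (ENNReal.ofReal ‖z‖ ^ (finrank ℝ E + s * p))⁻¹ ∂μ := by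
  set τ := finrank ℝ E + s * p
  set k₁ : E → ℝ≥0∞ := (ball (0 : E) 1).indicator
    fun z => (ENNReal.ofReal ‖z‖ ^ (τ - p))⁻¹ with hk₁
  set k₂ : E → ℝ≥0∞ := (ball (0 : E) 1)ᶜ.indicator
    fun z => (ENNReal.ofReal ‖z‖ ^ τ)⁻¹ with hk₂
  have hk₁m : Measurable k₁ := Measurable.indicator (by fun_prop) measurableSet_ball
  have hk₂m : Measurable k₂ := Measurable.indicator (by fun_prop) measurableSet_ball.compl
  calc gagliardoDensity μ s p g x
      ≤ ∫⁻ y, (L ^ p * k₁ (x - y) + (2 * M) ^ p * k₂ (x - y)) ∂μ := by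
        refine lintegral_mono fun y => ?_
        rcases eq_or_ne x y with rfl | hxy
        · simp [hp]
        have hxy₀ : ENNReal.ofReal ‖x - y‖ ≠ 0 := by simpa [sub_eq_zero] using hxy
        by_cases hz : x - y ∈ ball (0 : E) 1
        · refine le_add_right ?_
          have hlip : ‖g x - g y‖ₑ ≤ L * ENNReal.ofReal ‖x - y‖ := by
            simpa only [edist_eq_enorm_sub, ofReal_norm] using hL x y
          calc ‖g x - g y‖ₑ ^ p / ENNReal.ofReal ‖x - y‖ ^ τ
              ≤ (L * ENNReal.ofReal ‖x - y‖) ^ p / ENNReal.ofReal ‖x - y‖ ^ τ := by gcongr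
            _ = _ := by
              rw [hk₁, indicator_of_mem hz, ENNReal.mul_rpow_of_nonneg _ _ hp.le, mul_div_assoc,
                ← ENNReal.rpow_sub _ _ hxy₀ ENNReal.ofReal_ne_top, ← ENNReal.rpow_neg, neg_sub]
        · refine le_add_left ?_
          rw [hk₂, indicator_of_mem (mem_compl hz), ← div_eq_mul_inv, two_mul]
          gcongr
          exact enorm_sub_le.trans (add_le_add (hM x) (hM y))
    _ = _ := by
        rw [lintegral_add_left (by fun_prop), lintegral_const_mul _ (by fun_prop),
          lintegral_const_mul _ (by fun_prop), lintegral_sub_left_eq_self k₁ x,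
          lintegral_sub_left_eq_self k₂ x, hk₁, hk₂, lintegral_indicator measurableSet_ball,
          lintegral_indicator measurableSet_ball.compl]

lemma lintegral_gagliardoDensity_ne_top [Nontrivial E] {L : ℝ≥0} (hL : LipschitzWith L g)
    (hgs : HasCompactSupport g) {s p : ℝ} (hp : 0 < p) (hs₀ : 0 < s) (hs₁ : s < 1) :
    ∫⁻ x, gagliardoDensity μ s p g x ∂μ ≠ ∞ := by
  obtain ⟨M, hM⟩ := hgs.exists_bound_of_continuous hL.continuous
  have hM' : ∀ x, ‖g x‖ₑ ≤ ENNReal.ofReal M := fun x => by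
    rw [← ofReal_norm]
    exact ENNReal.ofReal_le_ofReal (hM x)
  have hsp : 0 < s * p := by positivity
  have hspp : s * p < p := mul_lt_of_lt_one_left hp hs₁
  have hnear := setLIntegral_ball_inv_norm_rpow_ne_top μ
    (a := finrank ℝ E + s * p - p) (by linarith) finrank_pos
  have hfar := setLIntegral_compl_ball_inv_norm_rpow_ne_top μ
    (a := finrank ℝ E + s * p) (by linarith)
  have hsupp : μ (tsupport g) ≠ ∞ := hgs.isCompact.measure_ne_top
  refine ne_top_of_le_ne_top ?_ (lintegral_lintegral_le_two_mul_setLIntegral ?_ (fun x y => ?_)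
    (isClosed_tsupport g).measurableSet fun x hx y hy => ?_)
  · refine ENNReal.mul_ne_top ENNReal.ofNat_ne_top (ne_top_of_le_ne_top ?_
      (lintegral_mono fun x => gagliardoDensity_le μ hL hM' hp s x))
    rw [setLIntegral_const]
    finiteness
  · exact measurable_gagliardoIntegrand hL.continuous s p
  · rw [norm_sub_rev, enorm_sub_rev]
  · simp [image_eq_zero_of_notMem_tsupport hx, image_eq_zero_of_notMem_tsupport hy, hp]

lemma eRieszEnergy_ne_top (hg : Continuous g) (hgs : HasCompactSupport g) {q α : ℝ} (hq : 0 < q)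
    (hα₀ : 0 < α) (hα : α ≤ finrank ℝ E) : eRieszEnergy μ q α g ≠ ∞ := by
  obtain ⟨B, hB, hle⟩ := exists_softRieszPotential_zero_le μ hg hgs hα₀ hα hq
  refine ne_top_of_le_ne_top
    (ENNReal.mul_ne_top hB (lintegral_enorm_rpow_ne_top (ν := μ) hg hgs hq)) ?_
  rw [← lintegral_const_mul' _ _ hB, eRieszEnergy]
  gcongr with x
  exact hle x

end EnergyFiniteness

section RieszEnergy

lemma integral_norm_rpow_eq_toReal {X F : Type*} [MeasurableSpace X] [NormedAddCommGroup F]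
    {ν : Measure X} {f : X → F} (hf : AEStronglyMeasurable f ν) {r : ℝ} (hr : 0 ≤ r) :
    ∫ x, ‖f x‖ ^ r ∂ν = (∫⁻ x, ‖f x‖ₑ ^ r ∂ν).toReal := by
  rw [integral_eq_lintegral_of_nonneg_ae (.of_forall fun x => by positivity)
    (hf.norm.aemeasurable.pow_const r).aestronglyMeasurable]
  congr 2 with x
  rw [← ENNReal.ofReal_rpow_of_nonneg (norm_nonneg _) hr, ofReal_norm]

variable {E F : Type*} [NormedAddCommGroup E] [NormedSpace ℝ E] [MeasurableSpace E]
  [NormedAddCommGroup F]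

/-- The Riesz (Coulomb) energy `∫∫ |g x| ^ q |g y| ^ q / |x - y| ^ (n - α) dx dy` as a real
number. -/
noncomputable def rieszEnergy (μ : Measure E) (q α : ℝ) (g : E → F) : ℝ :=
  ∫ x, ∫ y, ‖g x‖ ^ q * ‖g y‖ ^ q / ‖x - y‖ ^ ((finrank ℝ E : ℝ) - α) ∂μ ∂μ

variable [BorelSpace E] [FiniteDimensional ℝ E] (μ : Measure E) [μ.IsAddHaarMeasure]

lemma integral_integral_div_norm_rpow_eq_toReal [Nontrivial E] {u : E → E → ℝ}
    (hu : Measurable (Function.uncurry u)) (hu₀ : ∀ x y, 0 ≤ u x y) {a : ℝ}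
    (hfin : ∫⁻ x, ∫⁻ y, ENNReal.ofReal (u x y) / ENNReal.ofReal ‖x - y‖ ^ a ∂μ ∂μ ≠ ∞) :
    ∫ x, ∫ y, u x y / ‖x - y‖ ^ a ∂μ ∂μ =
      (∫⁻ x, ∫⁻ y, ENNReal.ofReal (u x y) / ENNReal.ofReal ‖x - y‖ ^ a ∂μ ∂μ).toReal := by
  have hker : Measurable (Function.uncurry fun x y : E =>
      ENNReal.ofReal (u x y) / ENNReal.ofReal ‖x - y‖ ^ a) := by
    simp only [Function.uncurry_def] at hu ⊢
    fun_prop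
  have hinner : Measurable fun x => ∫⁻ y, ENNReal.ofReal (u x y) / ENNReal.ofReal ‖x - y‖ ^ a ∂μ :=
    hker.lintegral_prod_right'
  rw [← integral_toReal hinner.aemeasurable (ae_lt_top hinner hfin)]
  congr 1 with x
  have hux : Measurable (u x) := hu.comp measurable_prodMk_left
  rw [integral_eq_lintegral_of_nonneg_ae (.of_forall fun y => div_nonneg (hu₀ x y) (by positivity))
    (by fun_prop : Measurable _).aestronglyMeasurable]
  have hne : ∀ᵐ y ∂μ, y ≠ x := by simp [ae_iff]
  refine congrArg _ (lintegral_congr_ae ?_)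
  filter_upwards [hne] with y hy
  have hpos : 0 < ‖x - y‖ := norm_pos_iff.2 (sub_ne_zero.2 hy.symm)
  rw [ENNReal.ofReal_div_of_pos (by positivity), ENNReal.ofReal_rpow_of_pos hpos]

lemma rieszEnergy_eq_toReal {g : E → F} (hg : Continuous g) (hgs : HasCompactSupport g) {q α : ℝ}
    (hq : 0 < q) (hα₀ : 0 < α) (hα : α ≤ finrank ℝ E) :
    rieszEnergy μ q α g = (eRieszEnergy μ q α g).toReal := by
  have : Nontrivial E := Module.nontrivial_of_finrank_pos (R := ℝ)
    (by exact_mod_cast hα₀.trans_le hα)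
  have hgm := hg.norm.measurable
  have hge := hg.enorm.measurable
  have heq : eRieszEnergy μ q α g = ∫⁻ x, ∫⁻ y, ENNReal.ofReal (‖g x‖ ^ q * ‖g y‖ ^ q) /
      ENNReal.ofReal ‖x - y‖ ^ ((finrank ℝ E : ℝ) - α) ∂μ ∂μ := by
    refine lintegral_congr fun x => ?_
    rw [softRieszPotential, ← lintegral_mul_const _ (by fun_prop)]
    refine lintegral_congr fun y => ?_
    rw [ENNReal.ofReal_mul (by positivity), ← ENNReal.ofReal_rpow_of_nonneg (norm_nonneg _) hq.le,
      ← ENNReal.ofReal_rpow_of_nonneg (norm_nonneg _) hq.le, ofReal_norm, ofReal_norm, zero_add,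
      mul_comm, mul_div_assoc]
  rw [heq, rieszEnergy, integral_integral_div_norm_rpow_eq_toReal μ
    (u := fun x y => ‖g x‖ ^ q * ‖g y‖ ^ q)
    (((hgm.comp measurable_fst).pow_const q).mul ((hgm.comp measurable_snd).pow_const q))
    (fun x y => by positivity) (heq ▸ eRieszEnergy_ne_top μ hg hgs hq hα₀ hα)]

end RieszEnergy

section SobolevEnergy

variable {E F : Type*} [NormedAddCommGroup E] [NormedSpace ℝ E] [MeasurableSpace E]
  [NormedAddCommGroup F] [NormedSpace ℝ F]

/-- The homogeneous Sobolev seminorm of order `s ∈ [0, 1]` on a finite-dimensional space: the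
Gagliardo seminorm for `0 < s < 1`, completed by the endpoints `‖g‖_{L^p}` and `‖∇g‖_{L^p}`. -/
noncomputable def sobolevSeminorm (μ : Measure E) (s p : ℝ) (g : E → F) : ℝ :=
  if s = 1 then (∫ x, ‖fderiv ℝ g x‖ ^ p ∂μ) ^ (1 / p)
  else if s = 0 then (∫ x, ‖g x‖ ^ p ∂μ) ^ (1 / p)
  else (∫ x, ∫ y, ‖g x - g y‖ ^ p / ‖x - y‖ ^ ((finrank ℝ E : ℝ) + s * p) ∂μ ∂μ) ^ (1 / p)

/-- The `p`-th power of `sobolevSeminorm`, with values in `[0, ∞]`. -/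
noncomputable def eSobolevEnergy (μ : Measure E) (s p : ℝ) (g : E → F) : ℝ≥0∞ :=
  if s = 1 then ∫⁻ x, ‖fderiv ℝ g x‖ₑ ^ p ∂μ
  else if s = 0 then ∫⁻ x, ‖g x‖ₑ ^ p ∂μ
  else ∫⁻ x, gagliardoDensity μ s p g x ∂μ

variable [BorelSpace E] [FiniteDimensional ℝ E] [Nontrivial E] (μ : Measure E)
  [μ.IsAddHaarMeasure] {g : E → F} (hg : ContDiff ℝ 1 g) (hgs : HasCompactSupport g) {s p : ℝ}
  (hp : 0 < p) (hs₀ : 0 ≤ s) (hs₁ : s ≤ 1)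

include hg hgs hp hs₀ hs₁

lemma eSobolevEnergy_ne_top : eSobolevEnergy μ s p g ≠ ∞ := by
  obtain ⟨L, hL⟩ := hg.lipschitzWith_of_hasCompactSupport hgs one_ne_zero
  unfold eSobolevEnergy
  split_ifs with h₁ h₀
  · exact lintegral_enorm_rpow_ne_top (hg.continuous_fderiv one_ne_zero) (hgs.fderiv ℝ) hp
  · exact lintegral_enorm_rpow_ne_top hg.continuous hgs hp
  · exact lintegral_gagliardoDensity_ne_top μ hL hgs hp (hs₀.lt_of_ne' h₀) (hs₁.lt_of_ne h₁)

lemma sobolevSeminorm_eq_toReal :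
    sobolevSeminorm μ s p g = (eSobolevEnergy μ s p g).toReal ^ (1 / p) := by
  have hfin := eSobolevEnergy_ne_top μ hg hgs hp hs₀ hs₁
  have hgc := hg.continuous
  unfold sobolevSeminorm
  unfold eSobolevEnergy at hfin ⊢
  split_ifs with h₁ h₀
  · rw [integral_norm_rpow_eq_toReal (hg.continuous_fderiv one_ne_zero).aestronglyMeasurable hp.le]
  · rw [integral_norm_rpow_eq_toReal hgc.aestronglyMeasurable hp.le]
  · have hnum : ∀ x y, ENNReal.ofReal (‖g x - g y‖ ^ p) = ‖g x - g y‖ₑ ^ p := fun x y => by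
      rw [← ENNReal.ofReal_rpow_of_nonneg (norm_nonneg _) hp.le, ofReal_norm]
    have hmeas : Measurable (Function.uncurry fun x y => ‖g x - g y‖ ^ p) :=
      ((hgc.comp continuous_fst).sub (hgc.comp continuous_snd)).norm.measurable.pow_const p
    simp only [h₁, h₀, if_false, gagliardoDensity, ← hnum] at hfin ⊢
    rw [integral_integral_div_norm_rpow_eq_toReal μ hmeas (fun x y => by positivity) hfin]

end SobolevEnergy

section Interpolation

variable {E : Type*} [NormedAddCommGroup E] [NormedSpace ℝ E] [FiniteDimensional ℝ E]
  [MeasurableSpace E] [BorelSpace E] (μ : Measure E) [μ.IsAddHaarMeasure]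

theorem exists_rpow_lintegral_le_eSobolevEnergy {γ θ p q s α β₁ β₂ : ℝ}
    (h : SobolevRieszExponents (finrank ℝ E) γ θ p q s α β₁ β₂) :
    ∃ C ≠ ∞, ∀ g : E → ℝ, ContDiff ℝ 1 g → HasCompactSupport g →
      (∫⁻ x, ‖g x‖ₑ ^ γ ∂μ) ^ (1 / γ) ≤
        C * (eSobolevEnergy μ s p g ^ β₁ * eRieszEnergy μ q α g ^ β₂) := by
  unfold eSobolevEnergy
  split_ifs with h₁ h₀
  · subst h₁
    exact exists_rpow_lintegral_le_fderiv μ h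
  · subst h₀
    obtain ⟨rfl, hβ₁, rfl⟩ := h.eq_of_zero
    exact ⟨1, ENNReal.one_ne_top, fun g _ _ => by simp [eq_one_div_of_mul_eq_one_left hβ₁]⟩
  · obtain ⟨C, hC, hle⟩ :=
      exists_rpow_lintegral_le_gagliardo μ h (h.s_nonneg.lt_of_ne' h₀) ℝ
    exact ⟨C, hC, fun g hg => hle g hg.continuous⟩

end Interpolation

theorem stmt0_general {E : Type*} [NormedAddCommGroup E] [NormedSpace ℝ E] [FiniteDimensional ℝ E]
    [MeasurableSpace E] [BorelSpace E] (μ : Measure E) [μ.IsAddHaarMeasure]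
    {γ p q s α β₁ β₂ : ℝ} (hp : 1 ≤ p) (hq : 1 ≤ q) (hs : s ≤ 1) (hα₀ : 0 < α)
    (hα : α ≤ finrank ℝ E) (hβ₁ : 0 ≤ β₁) (hβ₂ : 0 ≤ β₂) (hhom : β₁ * p + 2 * β₂ * q = 1)
    (hscale : (finrank ℝ E - s * p) * β₁ + (finrank ℝ E + α) * β₂ = finrank ℝ E / γ)
    (hint : 1 ≤ β₁ * γ + β₂ * γ) :
    ∃ C > 0, ∀ g : E → ℝ, ContDiff ℝ 1 g → HasCompactSupport g →
      (∫ x, |g x| ^ γ ∂μ) ^ (1 / γ) ≤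
        C * sobolevSeminorm μ s p g ^ (β₁ * p) * rieszEnergy μ q α g ^ β₂ := by
  have h := SobolevRieszExponents.of_scaling hp hq hα₀ hα hβ₁ hβ₂ hhom hscale hint
  have : Nontrivial E := Module.nontrivial_of_finrank_pos (R := ℝ) (by exact_mod_cast h.n_pos)
  obtain ⟨C, hC, hle⟩ := exists_rpow_lintegral_le_eSobolevEnergy μ h
  refine ⟨C.toReal + 1, by positivity, fun g hg hgs => ?_⟩
  have hS := eSobolevEnergy_ne_top μ hg hgs h.p_pos h.s_nonneg hs
  have hU := eRieszEnergy_ne_top μ hg.continuous hgs h.q_pos hα₀ hα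
  calc (∫ x, |g x| ^ γ ∂μ) ^ (1 / γ) = ((∫⁻ x, ‖g x‖ₑ ^ γ ∂μ) ^ (1 / γ)).toReal := by
        rw [← ENNReal.toReal_rpow]
        exact congrArg (· ^ (1 / γ))
          (integral_norm_rpow_eq_toReal hg.continuous.aestronglyMeasurable h.γ_pos.le)
    _ ≤ (C * (eSobolevEnergy μ s p g ^ β₁ * eRieszEnergy μ q α g ^ β₂)).toReal :=
        ENNReal.toReal_mono (by finiteness) (hle g hg hgs)
    _ = C.toReal *
          (eSobolevEnergy μ s p g).toReal ^ β₁ * (eRieszEnergy μ q α g).toReal ^ β₂ := by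
        rw [ENNReal.toReal_mul, ENNReal.toReal_mul, ENNReal.toReal_rpow, ENNReal.toReal_rpow,
          mul_assoc]
    _ ≤ (C.toReal + 1) *
          (eSobolevEnergy μ s p g).toReal ^ β₁ * (eRieszEnergy μ q α g).toReal ^ β₂ := by
        gcongr
        exact le_add_of_nonneg_right zero_le_one
    _ = _ := by
        rw [sobolevSeminorm_eq_toReal μ hg hgs h.p_pos h.s_nonneg hs,
          rieszEnergy_eq_toReal μ hg.continuous hgs h.q_pos hα₀ hα,
          ← rpow_mul ENNReal.toReal_nonneg, one_div_mul_eq_div, mul_div_cancel_right₀ _ h.p_pos.ne']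

end Development

theorem stmt0 (d : ℕ) (hd : 1 ≤ d) (γ p q s α β₁ β₂ : ℝ)
    (hγ : 1 < γ) (hp1 : 1 ≤ p) (hq1 : 1 ≤ q) (hs0 : 0 ≤ s) (hs1 : s ≤ 1)
    (hα0 : 0 < α) (hαd : α < d) (hβ₁ : 0 ≤ β₁) (hβ₂ : 0 ≤ β₂)
    (heq1 : β₁ * p + 2 * β₂ * q = 1)
    (heq2 : ((d : ℝ) - s * p) * β₁ + ((d : ℝ) + α) * β₂ = d / γ)
    (hcon : 1 ≤ β₁ * γ + β₂ * γ) :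
    ∃ C > 0, ∀ g : EuclideanSpace ℝ (Fin d) → ℝ,
      ContDiff ℝ 1 g → HasCompactSupport g →
      (∫ x, |g x| ^ γ) ^ (1 / γ) ≤
        C * sobolevSemi d s p g ^ (β₁ * p) * coulombEnergy d q α g ^ β₂ := by
  simpa [sobolevSemi, coulombEnergy, sobolevSeminorm, rieszEnergy] using
    stmt0_general (volume : Measure (EuclideanSpace ℝ (Fin d))) hp1 hq1 hs1 hα0
      (by simpa using hαd.le) hβ₁ hβ₂ heq1 (by simpa using heq2) hcon
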